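/- Let b > 0, let q : ℝ → ℂ be continuous on [−b,b], let f solve f'' − q f = 0 on [−b,b] with f(0) = 1, f'(0) = 0, and assume f(x) ≠ 0 for all x ∈ [−b,b]. Then there exists a continuous function K on {(x,t) : |t| ≤ |x| ≤ b} such that (i) for every twice continuously differentiable u : [−b,b] → ℂ, the function (Tu)(x) = u(x) + ∫_{−x}^{x} K(x,t)u(t)dt satisfies (Tu)'' − q·(Tu) = T(u'') on [−b,b], and (ii) for every x ∈ (0,b], the series Σ_{n=0}^{∞} (β_n(x)/x) P_n(t/x) converges uniformly for t ∈ [−x,x] to K(x,t), where β_n(x) = ((2n+1)/2)·(Σ_{k=0}^{n} l_{k,n} φ_k(x)/x^k − 1). -/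

import Mathlib

open MeasureTheory Set Filter Finset Complex Topology

noncomputable section

/-- The iterated integrals X⁽ⁿ⁾: X⁽⁰⁾ ≡ 1, X⁽ⁿ⁾(x) = n ∫₀ˣ X⁽ⁿ⁻¹⁾(s) (f(s)²)^((−1)ⁿ) ds. -/
def formalX (f : ℝ → ℂ) : ℕ → ℝ → ℂ
  | 0 => fun _ => 1
  | n + 1 => fun x =>
      (n + 1 : ℂ) * ∫ s in (0:ℝ)..x, formalX f n s * ((f s) ^ 2) ^ ((-1 : ℤ) ^ (n + 1))

/-- The iterated integrals X̃⁽ⁿ⁾: X̃⁽⁰⁾ ≡ 1, X̃⁽ⁿ⁾(x) = n ∫₀ˣ X̃⁽ⁿ⁻¹⁾(s) (f(s)²)^((−1)^(n−1)) ds. -/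
def formalXt (f : ℝ → ℂ) : ℕ → ℝ → ℂ
  | 0 => fun _ => 1
  | n + 1 => fun x =>
      (n + 1 : ℂ) * ∫ s in (0:ℝ)..x, formalXt f n s * ((f s) ^ 2) ^ ((-1 : ℤ) ^ n)

/-- The formal powers φₖ: φₖ = f·X⁽ᵏ⁾ for odd k, φₖ = f·X̃⁽ᵏ⁾ for even k. -/
def formalPower (f : ℝ → ℂ) (k : ℕ) (x : ℝ) : ℂ :=
  if Odd k then f x * formalX f k x else f x * formalXt f k x

/-- The Legendre polynomial Pₙ via Rodrigues' formula. -/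
def legendreP (n : ℕ) : Polynomial ℝ :=
  ((1 : ℝ) / (2 ^ n * n.factorial)) • Polynomial.derivative^[n] ((Polynomial.X ^ 2 - 1) ^ n)

/-- βₙ(x) = ((2n+1)/2)·(Σₖ l_{k,n} φₖ(x)/xᵏ − 1), where l_{k,n} is the coefficient of xᵏ in Pₙ. -/
def betaCoef (f : ℝ → ℂ) (n : ℕ) (x : ℝ) : ℂ :=
  ((2 * n + 1 : ℂ) / 2) *
    ((∑ k ∈ Finset.range (n + 1), ((legendreP n).coeff k : ℂ) * formalPower f k x / (x : ℂ) ^ k) - 1)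

theorem leg_C2 : Polynomial.C (2:ℝ) = 2 := map_ofNat _ 2

theorem leg_C3 : Polynomial.C (3:ℝ) = 3 := map_ofNat _ 3

theorem leg_iter_X_mul (p : Polynomial ℝ) (k : ℕ) :
    Polynomial.derivative^[k+1] (Polynomial.X * p)
      = Polynomial.X * Polynomial.derivative^[k+1] p
        + ((k:Polynomial ℝ) + 1) * Polynomial.derivative^[k] p := by
  induction k with
  | zero => simp [Polynomial.derivative_mul]; ring
  | succ k ih =>
    rw [Function.iterate_succ_apply', ih]
    simp only [Polynomial.derivative_add, Polynomial.derivative_mul, Polynomial.derivative_X,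
      Polynomial.derivative_natCast, Polynomial.derivative_one, Function.iterate_succ_apply']
    push_cast
    ring

theorem leg_scale (n : ℕ) : ((1:ℝ) / (2^n * n.factorial))
    = (1 / (2^(n+1) * (n+1).factorial)) * (2 * (n+1)) := by
  rw [Nat.factorial_succ]; push_cast
  have : (n.factorial : ℝ) ≠ 0 := by positivity
  field_simp
  ring

theorem leg_L8 (n : ℕ) :
    Polynomial.derivative (legendreP (n+1))
      = Polynomial.X * Polynomial.derivative (legendreP n) + ((n:Polynomial ℝ)+1) * legendreP n := by
  have h1 : Polynomial.derivative (((Polynomial.X:Polynomial ℝ)^2-1)^(n+1))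
      = ((2:ℝ)*(n+1)) • (Polynomial.X * (Polynomial.X^2-1)^n) := by
    rw [Polynomial.derivative_pow]
    simp [Polynomial.smul_eq_C_mul, leg_C2]
    ring
  simp only [legendreP, Polynomial.derivative_smul]
  rw [← Function.iterate_succ_apply' Polynomial.derivative (n+1),
    Function.iterate_succ_apply Polynomial.derivative (n+1), h1,
    Polynomial.iterate_derivative_smul, leg_iter_X_mul, leg_scale n,
    Function.iterate_succ_apply']
  simp only [Polynomial.smul_eq_C_mul, Polynomial.C_mul]
  ring

theorem leg_L4 (n : ℕ) :
    Polynomial.derivative (legendreP (n+2))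
      = (2*(n:Polynomial ℝ)+3) * legendreP (n+1) + Polynomial.derivative (legendreP n) := by
  have h1 : Polynomial.derivative (Polynomial.derivative (((Polynomial.X:Polynomial ℝ)^2-1)^(n+2)))
      = ((2:ℝ)*(n+1+1) * (2*n+3)) • ((Polynomial.X^2-1)^(n+1))
        + (((2:ℝ)*(n+1+1)) * (2 * (n+1))) • ((Polynomial.X^2-1)^n) := by
    rw [Polynomial.derivative_pow]
    simp [Polynomial.smul_eq_C_mul, Polynomial.derivative_pow, leg_C2, leg_C3]
    ring
  simp only [legendreP, Polynomial.derivative_smul]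
  rw [← Function.iterate_succ_apply' Polynomial.derivative (n+2),
    Function.iterate_succ_apply Polynomial.derivative (n+2), 
    Function.iterate_succ_apply Polynomial.derivative (n+1), h1, iterate_map_add,
    Polynomial.iterate_derivative_smul, Polynomial.iterate_derivative_smul, leg_scale n, leg_scale (n+1),
    Function.iterate_succ_apply', Function.iterate_succ_apply']
  simp only [Polynomial.smul_eq_C_mul, Polynomial.C_mul]
  push_cast
  simp [leg_C2, leg_C3]
  ring

theorem leg_zero : legendreP 0 = 1 := by simp [legendreP]

theorem leg_one : legendreP 1 = Polynomial.X := by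
  simp [legendreP, Polynomial.smul_eq_C_mul]
  rw [one_add_one_eq_two, ← leg_C2, ← mul_assoc, ← Polynomial.C_mul]
  norm_num

theorem leg_L9 (n : ℕ) :
    Polynomial.derivative (legendreP n)
      = Polynomial.X * Polynomial.derivative (legendreP (n+1))
        - ((n:Polynomial ℝ)+1) * legendreP (n+1) := by
  have h1 := leg_L4 n
  have h2 := leg_L8 (n+1)
  rw [h1] at h2
  push_cast at h2
  linear_combination h2

theorem leg_A (n : ℕ) : (1 - Polynomial.X^2) * Polynomial.derivative (legendreP (n+1))
    = ((n:Polynomial ℝ)+1) * (legendreP n - Polynomial.X * legendreP (n+1)) := by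
  have h1 := leg_L8 n
  have h2 := leg_L9 n
  linear_combination h1 + Polynomial.X * h2

theorem leg_B (n : ℕ) : (1 - Polynomial.X^2) * Polynomial.derivative (legendreP n)
    = ((n:Polynomial ℝ)+1) * (Polynomial.X * legendreP n - legendreP (n+1)) := by
  have h1 := leg_L8 n
  have h2 := leg_L9 n
  linear_combination Polynomial.X * h1 + h2

theorem leg_ode (n : ℕ) :
    Polynomial.derivative ((1 - Polynomial.X^2) * Polynomial.derivative (legendreP n))
      = - ((n:Polynomial ℝ)*((n:Polynomial ℝ)+1)) * legendreP n := by
  rw [leg_B]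
  simp [Polynomial.derivative_mul]
  linear_combination (-(n:Polynomial ℝ) - 1) * leg_L8 n

theorem leg_eval_one (n : ℕ) : (legendreP n).eval 1 = 1 := by
  induction n with
  | zero => simp [leg_zero]
  | succ n ih =>
    have h := congrArg (Polynomial.eval 1) (leg_A n)
    simp at h
    rcases h with h | h
    · have : (0:ℝ) < n + 1 := by positivity
      linarith
    · linarith

theorem leg_eval_neg_one (n : ℕ) : (legendreP n).eval (-1) = (-1)^n := by
  induction n with
  | zero => simp [leg_zero]
  | succ n ih =>
    have h := congrArg (Polynomial.eval (-1)) (leg_A n)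
    simp at h
    rcases h with h | h
    · have : (0:ℝ) < n + 1 := by positivity
      linarith
    · rw [pow_succ]; linarith

theorem leg_bonnet (n : ℕ) : ((n:Polynomial ℝ)+2) * legendreP (n+2)
    = (2*(n:Polynomial ℝ)+3) * (Polynomial.X * legendreP (n+1)) - ((n:Polynomial ℝ)+1) * legendreP n := by
  have h1 := leg_A n
  have h2 := leg_B (n+1)
  push_cast at h2
  linear_combination h2 - h1

theorem leg_span (p : Polynomial ℝ) : p ∈ Submodule.span ℝ (Set.range legendreP) := by
  have hX : ∀ p ∈ Submodule.span ℝ (Set.range legendreP),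
      Polynomial.X * p ∈ Submodule.span ℝ (Set.range legendreP) := by
    intro p hp
    induction hp using Submodule.span_induction with
    | zero => simp
    | add x y _ _ hx hy => rw [mul_add]; exact Submodule.add_mem _ hx hy
    | smul a x _ hx => rw [mul_smul_comm]; exact Submodule.smul_mem _ _ hx
    | mem x hx =>
      obtain ⟨n, rfl⟩ := hx
      rcases n with _ | n
      · rw [leg_zero, mul_one, ← leg_one]
        exact Submodule.subset_span ⟨1, rfl⟩
      · have h := leg_bonnet n
        have h2 : Polynomial.X * legendreP (n+1) = (((n:ℝ)+2)/(2*n+3)) • legendreP (n+2)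
            + (((n:ℝ)+1)/(2*n+3)) • legendreP n := by
          have h0 : (2*(n:ℝ)+3) ≠ 0 := by positivity
          have h3 : (2*(n:ℝ)+3) • (Polynomial.X * legendreP (n+1)) = (((n:ℝ)+2)) • legendreP (n+2)
            + (((n:ℝ)+1)) • legendreP n := by
            simp [Polynomial.smul_eq_C_mul, leg_C2, leg_C3]
            linear_combination -h
          rw [← inv_smul_smul₀ h0 (Polynomial.X * legendreP (n+1)), h3, smul_add, smul_smul, smul_smul]
          congr 2 <;> ring
        rw [h2]
        exact Submodule.add_mem _ (Submodule.smul_mem _ _ (Submodule.subset_span ⟨_, rfl⟩))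
          (Submodule.smul_mem _ _ (Submodule.subset_span ⟨_, rfl⟩))
  have h1 : ∀ n : ℕ, (Polynomial.X:Polynomial ℝ)^n ∈ Submodule.span ℝ (Set.range legendreP) := by
    intro n
    induction n with
    | zero => rw [pow_zero, ← leg_zero]; exact Submodule.subset_span ⟨0, rfl⟩
    | succ n ih => rw [pow_succ']; exact hX _ ih
  induction p using Polynomial.induction_on' with
  | add p q hp hq => exact Submodule.add_mem _ hp hq
  | monomial n a =>
    rw [← Polynomial.C_mul_X_pow_eq_monomial, ← Polynomial.smul_eq_C_mul]
    exact Submodule.smul_mem _ _ (h1 n)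

theorem leg_ibp (h k : ℝ → ℝ) (hk : Continuous k) (hh : ∀ x, HasDerivAt h (k x) x)
    (p : Polynomial ℝ) :
    ∫ x in (-1:ℝ)..1, h x * (Polynomial.derivative p).eval x
      = h 1 * p.eval 1 - h (-1) * p.eval (-1) - ∫ x in (-1:ℝ)..1, k x * p.eval x := by
  refine intervalIntegral.integral_mul_deriv_eq_deriv_mul (u := h) (v := fun x => p.eval x)
    (u' := k) (v' := fun x => (Polynomial.derivative p).eval x) ?_ ?_ ?_ ?_
  · intro x _; exact hh x
  · intro x _; exact p.hasDerivAt x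
  · exact hk.intervalIntegrable _ _
  · exact (Polynomial.derivative p).continuous.intervalIntegrable _ _

theorem leg_orth {n k : ℕ} (hnk : n ≠ k) :
    ∫ x in (-1:ℝ)..1, (legendreP n).eval x * (legendreP k).eval x = 0 := by
  have key : ∀ n k : ℕ, ((n:ℝ)*(n+1)) * ∫ x in (-1:ℝ)..1, (legendreP n).eval x * (legendreP k).eval x
      = ∫ x in (-1:ℝ)..1, (1-x^2) * ((Polynomial.derivative (legendreP n)).eval x
        * (Polynomial.derivative (legendreP k)).eval x) := by
    intro n k
    have h := leg_ibp (fun x => (legendreP k).eval x)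
      (fun x => (Polynomial.derivative (legendreP k)).eval x)
      (Polynomial.continuous _) (fun x => Polynomial.hasDerivAt _ x)
      ((1 - Polynomial.X^2) * Polynomial.derivative (legendreP n))
    rw [leg_ode] at h
    simp only [Polynomial.eval_mul, Polynomial.eval_sub, Polynomial.eval_one, Polynomial.eval_pow,
      Polynomial.eval_X, Polynomial.eval_neg, Polynomial.eval_natCast, Polynomial.eval_add] at h
    rw [← intervalIntegral.integral_const_mul]
    have e1 : ∀ x:ℝ, (n:ℝ)*(n+1) * ((legendreP n).eval x * (legendreP k).eval x)
      = - ((legendreP k).eval x * (-((n:ℝ)*(n+1)) * (legendreP n).eval x)) := by intro x; ring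
    simp_rw [e1]
    rw [intervalIntegral.integral_neg, h]
    norm_num
    congr 1
    ext x
    ring
  have h1 := key n k
  have h2 := key k n
  have e2 : ∫ x in (-1:ℝ)..1, (legendreP k).eval x * (legendreP n).eval x
    = ∫ x in (-1:ℝ)..1, (legendreP n).eval x * (legendreP k).eval x := by
    congr 1; ext x; ring
  have e3 : ∫ x in (-1:ℝ)..1, (1-x^2) * ((Polynomial.derivative (legendreP k)).eval x
        * (Polynomial.derivative (legendreP n)).eval x)
    = ∫ x in (-1:ℝ)..1, (1-x^2) * ((Polynomial.derivative (legendreP n)).eval x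
        * (Polynomial.derivative (legendreP k)).eval x) := by
    congr 1; ext x; ring
  rw [e2, e3, ← h1] at h2
  have h3 : ((n:ℝ) - k) * (n + k + 1) *
      ∫ x in (-1:ℝ)..1, (legendreP n).eval x * (legendreP k).eval x = 0 := by
    linear_combination -h2
  have h4 : ((n:ℝ) - k) * (n + k + 1) ≠ 0 := by
    apply mul_ne_zero
    · rw [sub_ne_zero]; exact_mod_cast hnk
    · positivity
  exact (mul_eq_zero.mp h3).resolve_left h4

theorem leg_orth_deriv (k n : ℕ) (hkn : k ≤ n) :
    ∫ x in (-1:ℝ)..1, (legendreP n).eval x * (Polynomial.derivative (legendreP k)).eval x = 0 := by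
  induction k using Nat.strong_induction_on with
  | _ k ih =>
    rcases k with _ | _ | k
    · simp [leg_zero]
    · have := leg_orth (n := n) (k := 0) (by omega)
      simpa [leg_one, leg_zero] using this
    · rw [leg_L4]
      have h1 := leg_orth (n := n) (k := k+1) (by omega)
      have h2 := ih k (by omega) (by omega)
      have : ∀ x : ℝ, (legendreP n).eval x * ((2*(k:Polynomial ℝ)+3) * legendreP (k+1)
          + Polynomial.derivative (legendreP k)).eval x
          = (2*(k:ℝ)+3) * ((legendreP n).eval x * (legendreP (k+1)).eval x)
            + (legendreP n).eval x * (Polynomial.derivative (legendreP k)).eval x := by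
        intro x; simp; ring
      simp_rw [this]
      rw [intervalIntegral.integral_add, intervalIntegral.integral_const_mul, h1, h2]
      · simp
      · exact Continuous.intervalIntegrable (by fun_prop) _ _
      · exact Continuous.intervalIntegrable (by fun_prop) _ _

theorem leg_norm (n : ℕ) :
    ∫ x in (-1:ℝ)..1, (legendreP n).eval x * (legendreP n).eval x = 2 / (2*n+1) := by
  rcases n with _ | n
  · simp [leg_zero]; norm_num
  · have h := leg_ibp (fun x => (legendreP (n+1)).eval x)
      (fun x => (Polynomial.derivative (legendreP (n+1))).eval x)
      (Polynomial.continuous _) (fun x => Polynomial.hasDerivAt _ x) (legendreP (n+2))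
    have e1 : ∫ x in (-1:ℝ)..1, (Polynomial.derivative (legendreP (n+1))).eval x * (legendreP (n+2)).eval x
        = 0 := by
      rw [← leg_orth_deriv (n+1) (n+2) (by omega)]
      congr 1; ext x; ring
    rw [e1, leg_L4, leg_eval_one, leg_eval_one, leg_eval_neg_one, leg_eval_neg_one] at h
    have : ∀ x : ℝ, (legendreP (n+1)).eval x * ((2*(n:Polynomial ℝ)+3) * legendreP (n+1)
          + Polynomial.derivative (legendreP n)).eval x
          = (2*(n:ℝ)+3) * ((legendreP (n+1)).eval x * (legendreP (n+1)).eval x)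
            + (legendreP (n+1)).eval x * (Polynomial.derivative (legendreP n)).eval x := by
        intro x; simp; ring
    simp_rw [this] at h
    rw [intervalIntegral.integral_add, intervalIntegral.integral_const_mul,
      leg_orth_deriv n (n+1) (by omega), ← pow_add, show n+1+(n+2) = 2*(n+1)+1 by ring,
      pow_succ, pow_mul] at h
    · rw [eq_div_iff (by positivity)]
      push_cast
      norm_num at h
      linarith
    · exact Continuous.intervalIntegrable (by fun_prop) _ _
    · exact Continuous.intervalIntegrable (by fun_prop) _ _

theorem leg_bound (n : ℕ) (t : ℝ) (ht : t ∈ Set.Icc (-1:ℝ) 1) : |(legendreP n).eval t| ≤ 1 := by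
  rcases Nat.eq_zero_or_pos n with rfl | hn
  · simp [leg_zero]
  set m : ℝ := (n:ℝ)*(n+1) with hm
  have hmpos : 0 < m := by positivity
  set S : Polynomial ℝ := Polynomial.C m * legendreP n ^ 2
    + (1 - Polynomial.X^2) * (Polynomial.derivative (legendreP n))^2 with hS
  have hS' : Polynomial.derivative S = 2 * Polynomial.X * (Polynomial.derivative (legendreP n))^2 := by
    have h := leg_ode n
    simp [Polynomial.derivative_mul] at h
    simp [hS, hm, Polynomial.derivative_mul, Polynomial.derivative_pow, leg_C2]
    linear_combination 2 * Polynomial.derivative (legendreP n) * h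
  have hSt : m * ((legendreP n).eval t)^2 ≤ S.eval t := by
    simp [hS]
    have : 0 ≤ 1 - t^2 := by nlinarith [ht.1, ht.2]
    positivity
  have hSle : S.eval t ≤ m := by
    rcases le_total 0 t with h0 | h0
    · have hmono : MonotoneOn (fun x => S.eval x) (Set.Icc 0 1) := by
        apply monotoneOn_of_deriv_nonneg (convex_Icc _ _) (by fun_prop) (by fun_prop)
        intro x hx
        rw [interior_Icc] at hx
        rw [Polynomial.deriv, hS']
        have := hx.1
        simp
        positivity
      have := hmono ⟨h0, ht.2⟩ (Set.right_mem_Icc.mpr zero_le_one) ht.2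
      simpa [hS, leg_eval_one] using this
    · have hmono : AntitoneOn (fun x => S.eval x) (Set.Icc (-1) 0) := by
        apply antitoneOn_of_deriv_nonpos (convex_Icc _ _) (by fun_prop) (by fun_prop)
        intro x hx
        rw [interior_Icc] at hx
        rw [Polynomial.deriv, hS']
        have := hx.2
        simp
        exact mul_nonpos_of_nonpos_of_nonneg (by linarith) (by positivity)
      have := hmono (Set.left_mem_Icc.mpr (by norm_num)) ⟨ht.1, h0⟩ ht.1
      have e : (((-1:ℝ))^n)^2 = 1 := by rw [← pow_mul, mul_comm, pow_mul]; simp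
      simpa [hS, leg_eval_neg_one, e] using this
  have : ((legendreP n).eval t)^2 ≤ 1 := by
    by_contra hc
    push Not at hc
    nlinarith
  exact (sq_le_one_iff_abs_le_one _).mp this

/-- Legendre coefficient without normalisation -/
def legC (g : ℝ → ℝ) (n : ℕ) : ℝ := ∫ x in (-1:ℝ)..1, g x * (legendreP n).eval x

def legS (g : ℝ → ℝ) (N : ℕ) : Polynomial ℝ :=
  ∑ n ∈ Finset.range N, Polynomial.C ((2*(n:ℝ)+1)/2 * legC g n) * legendreP n

theorem legC_legS (g : ℝ → ℝ) (N n : ℕ) (hn : n < N) :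
    legC (fun x => (legS g N).eval x) n = legC g n := by
  have : ∀ x : ℝ, (legS g N).eval x * (legendreP n).eval x
      = ∑ m ∈ Finset.range N, ((2*(m:ℝ)+1)/2 * legC g m) *
        ((legendreP m).eval x * (legendreP n).eval x) := by
    intro x
    simp only [legS, Polynomial.eval_finsetSum, Finset.sum_mul]
    apply Finset.sum_congr rfl
    intro i _
    simp only [Polynomial.eval_mul, Polynomial.eval_C]
    ring
  conv_lhs => unfold legC
  simp_rw [this]
  rw [intervalIntegral.integral_finsetSum]
  · simp_rw [intervalIntegral.integral_const_mul]
    rw [Finset.sum_eq_single n]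
    · rw [leg_norm]
      have : (2*(n:ℝ)+1) ≠ 0 := by positivity
      field_simp
    · intro m _ hmn
      rw [leg_orth hmn, mul_zero]
    · intro h
      exact absurd (Finset.mem_range.mpr hn) h
  · intro i _
    exact Continuous.intervalIntegrable (by fun_prop) _ _

theorem leg_int_mul_legS (g k : ℝ → ℝ) (hg : Continuous g) (N : ℕ) :
    ∫ x in (-1:ℝ)..1, g x * (legS k N).eval x
      = ∑ n ∈ Finset.range N, (2*(n:ℝ)+1)/2 * legC k n * legC g n := by
  have : ∀ x : ℝ, g x * (legS k N).eval x
      = ∑ m ∈ Finset.range N, ((2*(m:ℝ)+1)/2 * legC k m) *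
        (g x * (legendreP m).eval x) := by
    intro x
    simp only [legS, Polynomial.eval_finsetSum, Finset.mul_sum]
    apply Finset.sum_congr rfl
    intro i _
    simp only [Polynomial.eval_mul, Polynomial.eval_C]
    ring
  simp_rw [this]
  rw [intervalIntegral.integral_finsetSum]
  · simp_rw [intervalIntegral.integral_const_mul]
    rfl
  · intro i _
    exact Continuous.intervalIntegrable (by fun_prop) _ _

theorem leg_bessel (k : ℝ → ℝ) (hk : Continuous k) (N : ℕ) :
    ∫ x in (-1:ℝ)..1, ((legS k N).eval x)^2 ≤ ∫ x in (-1:ℝ)..1, (k x)^2 := by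
  have h1 : ∫ x in (-1:ℝ)..1, (legS k N).eval x * (legS k N).eval x
      = ∫ x in (-1:ℝ)..1, k x * (legS k N).eval x := by
    rw [leg_int_mul_legS _ _ (Polynomial.continuous _), leg_int_mul_legS _ _ hk]
    apply Finset.sum_congr rfl
    intro n hn
    rw [legC_legS _ _ _ (Finset.mem_range.mp hn)]
  have h2 : 0 ≤ ∫ x in (-1:ℝ)..1, (k x - (legS k N).eval x)^2 :=
    intervalIntegral.integral_nonneg (by norm_num) (fun x _ => sq_nonneg _)
  have h3 : ∫ x in (-1:ℝ)..1, (k x - (legS k N).eval x)^2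
      = (∫ x in (-1:ℝ)..1, (k x)^2) - 2 * (∫ x in (-1:ℝ)..1, k x * (legS k N).eval x)
        + ∫ x in (-1:ℝ)..1, (legS k N).eval x * (legS k N).eval x := by
    rw [← intervalIntegral.integral_const_mul, ← intervalIntegral.integral_sub,
      ← intervalIntegral.integral_add]
    · congr 1; ext x; ring
    all_goals exact Continuous.intervalIntegrable (by fun_prop) _ _
  have h4 : ∫ x in (-1:ℝ)..1, ((legS k N).eval x)^2
      = ∫ x in (-1:ℝ)..1, (legS k N).eval x * (legS k N).eval x := by
    congr 1; ext x; ring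
  rw [h4]
  linarith

theorem legC_bound (k : ℝ → ℝ) (ε : ℝ) (hk : ∀ x ∈ Set.Icc (-1:ℝ) 1, |k x| ≤ ε) (n : ℕ) :
    |legC k n| ≤ 2 * ε := by
  have := intervalIntegral.norm_integral_le_of_norm_le_const (a := (-1:ℝ)) (b := 1) (C := ε)
    (f := fun x => k x * (legendreP n).eval x) (by
      intro x hx
      rw [Set.uIoc_of_le (by norm_num)] at hx
      have hx' : x ∈ Set.Icc (-1:ℝ) 1 := ⟨hx.1.le, hx.2⟩
      rw [norm_mul]
      have h1 := hk x hx'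
      have h2 := leg_bound n x hx'
      calc |k x| * |(legendreP n).eval x| ≤ ε * 1 :=
            mul_le_mul h1 h2 (abs_nonneg _) ((abs_nonneg _).trans h1)
        _ = ε := mul_one _)
  norm_num at this
  unfold legC
  linarith

theorem legC_succ (h k : ℝ → ℝ) (hk : Continuous k) (hh : ∀ x, HasDerivAt h (k x) x) (n : ℕ) :
    (2*((n+1:ℕ):ℝ)+1)/2 * legC h (n+1) = (legC k n - legC k (n+2)) / 2 := by
  have h1 := leg_ibp h k hk hh (legendreP (n+2))
  have h2 := leg_ibp h k hk hh (legendreP n)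
  have hc : Continuous h := continuous_iff_continuousAt.mpr fun x => (hh x).continuousAt
  have e : ∫ x in (-1:ℝ)..1, h x * (Polynomial.derivative (legendreP (n+2))).eval x
      = (2*(n:ℝ)+3) * legC h (n+1)
        + ∫ x in (-1:ℝ)..1, h x * (Polynomial.derivative (legendreP n)).eval x := by
    rw [leg_L4, legC, ← intervalIntegral.integral_const_mul, ← intervalIntegral.integral_add]
    · congr 1; ext x; simp; ring
    all_goals exact Continuous.intervalIntegrable (by fun_prop) _ _
  rw [e, h2] at h1
  simp only [leg_eval_one, leg_eval_neg_one, pow_add] at h1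
  unfold legC at *
  push_cast
  linarith

theorem legC_zero (h k : ℝ → ℝ) (hk : Continuous k) (hh : ∀ x, HasDerivAt h (k x) x)
    (h0 : h (-1) = 0) : legC h 0 = legC k 0 - legC k 1 := by
  have h1 := leg_ibp h k hk hh (legendreP 1)
  have h2 := leg_ibp h k hk hh (legendreP 0)
  rw [leg_one] at h1
  rw [leg_zero] at h2
  simp [h0] at h1 h2
  simp [legC, leg_zero, leg_one]
  linarith

theorem leg_int_P (n : ℕ) (t : ℝ) : ∫ x in (-1:ℝ)..t, (legendreP (n+1)).eval x
    = ((legendreP (n+2)).eval t - (legendreP n).eval t) / (2*(n:ℝ)+3) := by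
  have h0 : (2*(n:ℝ)+3) ≠ 0 := by positivity
  have h : ∀ x : ℝ, (legendreP (n+1)).eval x
      = (2*(n:ℝ)+3)⁻¹ * (Polynomial.derivative (legendreP (n+2) - legendreP n)).eval x := by
    intro x
    rw [Polynomial.derivative_sub, leg_L4]
    simp
    field_simp
  simp_rw [h]
  rw [intervalIntegral.integral_const_mul, intervalIntegral.integral_eq_sub_of_hasDerivAt
    (f := fun x => (legendreP (n+2) - legendreP n).eval x)
    (fun x _ => Polynomial.hasDerivAt _ x) (Polynomial.continuous _ |>.intervalIntegrable _ _)]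
  simp [leg_eval_neg_one, pow_add]
  field_simp

theorem legS_eq (h k : ℝ → ℝ) (hk : Continuous k) (hh : ∀ x, HasDerivAt h (k x) x)
    (h0 : h (-1) = 0) (N : ℕ) (t : ℝ) :
    (legS h (N+1)).eval t = (∫ x in (-1:ℝ)..t, (legS k (N+1)).eval x)
      - (legC k N * (legendreP (N+1)).eval t + legC k (N+1) * (legendreP N).eval t) / 2 := by
  induction N with
  | zero =>
    simp [legS, leg_zero, leg_one, legC_zero h k hk hh h0]
    ring
  | succ N ih =>
    have e1 : (legS h (N+1+1)).eval t = (legS h (N+1)).eval t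
        + (legC k N - legC k (N+2)) / 2 * (legendreP (N+1)).eval t := by
      rw [← legC_succ h k hk hh]
      conv_lhs => rw [legS, Finset.sum_range_succ, ← legS]
      simp
    have e2 : (∫ x in (-1:ℝ)..t, (legS k (N+1+1)).eval x)
        = (∫ x in (-1:ℝ)..t, (legS k (N+1)).eval x)
          + (legC k (N+1)) / 2 * ((legendreP (N+2)).eval t - (legendreP N).eval t) := by
      have : ∀ x : ℝ, (legS k (N+1+1)).eval x = (legS k (N+1)).eval x
          + (2*(N:ℝ)+3) / 2 * legC k (N+1) * (legendreP (N+1)).eval x := by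
        intro x
        conv_lhs => rw [legS, Finset.sum_range_succ, ← legS]
        simp
        left; left; ring
      simp_rw [this]
      rw [intervalIntegral.integral_add, intervalIntegral.integral_const_mul, leg_int_P]
      · have h0 : (2*(N:ℝ)+3) ≠ 0 := by positivity
        field_simp
      all_goals exact Continuous.intervalIntegrable (by fun_prop) _ _
    rw [e1, e2, ih]
    ring

theorem leg_int_small (k : ℝ → ℝ) (hk : Continuous k) (ε : ℝ) (hε : 0 < ε)
    (hkb : ∀ x ∈ Set.Icc (-1:ℝ) 1, |k x| ≤ ε) (N : ℕ) (t : ℝ) (ht : t ∈ Set.Icc (-1:ℝ) 1) :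
    |∫ x in (-1:ℝ)..t, (legS k N).eval x| ≤ 2 * ε := by
  have hc : Continuous fun x => |(legS k N).eval x| := (Polynomial.continuous _).abs
  calc |∫ x in (-1:ℝ)..t, (legS k N).eval x| ≤ ∫ x in (-1:ℝ)..t, |(legS k N).eval x| :=
        intervalIntegral.abs_integral_le_integral_abs ht.1
    _ ≤ ∫ x in (-1:ℝ)..1, |(legS k N).eval x| := by
        apply intervalIntegral.integral_mono_interval le_rfl ht.1 ht.2
        · exact Filter.Eventually.of_forall fun x => abs_nonneg _
        · exact hc.intervalIntegrable _ _
    _ ≤ ∫ x in (-1:ℝ)..1, (ε/2 + (1/(2*ε)) * ((legS k N).eval x)^2) := by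
        apply intervalIntegral.integral_mono_on (by norm_num) (hc.intervalIntegrable _ _)
        · exact Continuous.intervalIntegrable (by fun_prop) _ _
        · intro x _
          rw [← sq_abs]
          set y := |(legS k N).eval x|
          have : ε/2 + (1/(2*ε)) * y^2 - y = (1/(2*ε)) * (y - ε)^2 := by
            field_simp; ring
          have h2 : 0 ≤ (1/(2*ε)) * (y - ε)^2 := by positivity
          linarith
    _ = ε + (1/(2*ε)) * ∫ x in (-1:ℝ)..1, ((legS k N).eval x)^2 := by
        rw [intervalIntegral.integral_add, intervalIntegral.integral_const_mul]
        · simp; ring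
        all_goals exact Continuous.intervalIntegrable (by fun_prop) _ _
    _ ≤ ε + (1/(2*ε)) * (2 * ε^2) := by
        gcongr
        refine (leg_bessel k hk N).trans ?_
        have : ∫ x in (-1:ℝ)..1, (k x)^2 ≤ ∫ x in (-1:ℝ)..1, ε^2 := by
          apply intervalIntegral.integral_mono_on (by norm_num)
          · exact Continuous.intervalIntegrable (by fun_prop) _ _
          · exact Continuous.intervalIntegrable (by fun_prop) _ _
          · intro x hx
            exact sq_le_sq.mpr (by rw [abs_of_pos hε]; exact hkb x hx)
        refine this.trans ?_
        simp; norm_num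
    _ = 2 * ε := by field_simp; ring

theorem leg_small (h k : ℝ → ℝ) (hk : Continuous k) (hh : ∀ x, HasDerivAt h (k x) x)
    (h0 : h (-1) = 0) (ε : ℝ) (hε : 0 < ε)
    (hkb : ∀ x ∈ Set.Icc (-1:ℝ) 1, |k x| ≤ ε) (N : ℕ) (t : ℝ) (ht : t ∈ Set.Icc (-1:ℝ) 1) :
    |(legS h N).eval t| ≤ 4 * ε := by
  rcases N with _ | N
  · simp [legS]; linarith
  · rw [legS_eq h k hk hh h0]
    have h1 := abs_le.mp (leg_int_small k hk ε hε hkb (N+1) t ht)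
    have b : ∀ n m, |legC k n * (legendreP m).eval t| ≤ 2 * ε := by
      intro n m
      rw [abs_mul]
      calc |legC k n| * |(legendreP m).eval t| ≤ (2*ε) * 1 :=
            mul_le_mul (legC_bound k ε hkb n) (leg_bound m t ht) (abs_nonneg _) (by linarith)
        _ = _ := by ring
    have h2 := abs_le.mp (b N (N+1))
    have h3 := abs_le.mp (b (N+1) N)
    rw [abs_le]
    constructor <;> linarith

theorem legS_add (g h : ℝ → ℝ) (hg : Continuous g) (hh : Continuous h) (N : ℕ) :
    legS (fun x => g x + h x) N = legS g N + legS h N := by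
  have : ∀ n, legC (fun x => g x + h x) n = legC g n + legC h n := by
    intro n
    simp only [legC]
    rw [← intervalIntegral.integral_add]
    · congr 1; ext x; ring
    all_goals exact Continuous.intervalIntegrable (by fun_prop) _ _
  simp only [legS, this, mul_add, Polynomial.C_add, add_mul, Finset.sum_add_distrib]

theorem legS_smul (g : ℝ → ℝ) (a : ℝ) (N : ℕ) :
    legS (fun x => a * g x) N = a • legS g N := by
  have : ∀ n, legC (fun x => a * g x) n = a * legC g n := by
    intro n
    simp only [legC]
    rw [← intervalIntegral.integral_const_mul]
    congr 1; ext x; ring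
  simp only [legS, this, Finset.smul_sum, Polynomial.smul_eq_C_mul]
  apply Finset.sum_congr rfl
  intro n _
  simp only [Polynomial.C_mul]
  ring

theorem legS_poly (p : Polynomial ℝ) : ∃ N0, ∀ N ≥ N0, legS (fun x => p.eval x) N = p := by
  have hp := leg_span p
  induction hp using Submodule.span_induction with
  | zero => exact ⟨0, fun N _ => by simp [legS, legC]⟩
  | add x y _ _ hx hy =>
    obtain ⟨n, hn⟩ := hx
    obtain ⟨m, hm⟩ := hy
    refine ⟨max n m, fun N hN => ?_⟩
    simp only [Polynomial.eval_add]
    rw [legS_add _ _ (Polynomial.continuous _) (Polynomial.continuous _),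
      hn N (le_of_max_le_left hN), hm N (le_of_max_le_right hN)]
  | smul a x _ hx =>
    obtain ⟨n, hn⟩ := hx
    refine ⟨n, fun N hN => ?_⟩
    simp only [Polynomial.eval_smul, smul_eq_mul]
    rw [legS_smul, hn N hN]
  | mem x hx =>
    obtain ⟨n, rfl⟩ := hx
    refine ⟨n+1, fun N hN => ?_⟩
    rw [legS, Finset.sum_eq_single n]
    · rw [legC, leg_norm]
      have : (2*(n:ℝ)+1) ≠ 0 := by positivity
      have e : (2*(n:ℝ)+1)/2 * (2/(2*(n:ℝ)+1)) = 1 := by field_simp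
      rw [e]; simp
    · intro m _ hmn
      rw [legC, leg_orth hmn.symm]
      simp
    · intro h
      exact absurd (Finset.mem_range.mpr (by omega)) h

theorem poly_antideriv (p : Polynomial ℝ) : ∃ P : Polynomial ℝ, Polynomial.derivative P = p := by
  induction p using Polynomial.induction_on' with
  | add p q hp hq =>
    obtain ⟨P, rfl⟩ := hp
    obtain ⟨Q, rfl⟩ := hq
    exact ⟨P + Q, by simp⟩
  | monomial n a =>
    refine ⟨Polynomial.monomial (n+1) (a/(n+1)), ?_⟩
    rw [Polynomial.derivative_monomial]
    congr 1
    push_cast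
    field_simp

theorem leg_uniform (g g' : ℝ → ℝ) (hg' : Continuous g') (hg : ∀ x, HasDerivAt g (g' x) x)
    (ε : ℝ) (hε : 0 < ε) :
    ∃ N0, ∀ N ≥ N0, ∀ t ∈ Set.Icc (-1:ℝ) 1, |(legS g N).eval t - g t| < ε := by
  set δ := ε / 10 with hδ
  have hδ0 : 0 < δ := by positivity
  obtain ⟨r, hr⟩ := exists_polynomial_near_of_continuousOn (-1) 1 g' hg'.continuousOn δ hδ0
  obtain ⟨R, hR⟩ := poly_antideriv r
  set p : Polynomial ℝ := R + Polynomial.C (g (-1) - R.eval (-1)) with hp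
  have hp' : Polynomial.derivative p = r := by simp [hp, hR]
  have hp1 : p.eval (-1) = g (-1) := by simp [hp]
  obtain ⟨N0, hN0⟩ := legS_poly p
  set h : ℝ → ℝ := fun x => g x - p.eval x with hh
  set k : ℝ → ℝ := fun x => g' x - r.eval x with hk
  have hkc : Continuous k := by fun_prop
  have hd : ∀ x, HasDerivAt h (k x) x := fun x => (hg x).sub (hp' ▸ p.hasDerivAt x)
  have hb : ∀ x ∈ Set.Icc (-1:ℝ) 1, |k x| ≤ δ := fun x hx => by
    rw [hk, abs_sub_comm]; exact (hr x hx).le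
  have h0 : h (-1) = 0 := by simp [hh, hp1]
  have hgc : Continuous h := continuous_iff_continuousAt.mpr fun x => (hd x).continuousAt
  refine ⟨N0, fun N hN t ht => ?_⟩
  have e1 : legS g N = legS h N + p := by
    rw [← hN0 N hN, ← legS_add _ _ hgc (Polynomial.continuous _)]
    congr 1
    ext x
    simp [hh]
  have b1 := abs_le.mp (leg_small h k hkc hd h0 δ hδ0 hb N t ht)
  have b2 : |h t| ≤ 2 * δ := by
    have := Convex.norm_image_sub_le_of_norm_hasDerivWithin_le (f := h) (f' := k) (C := δ)
      (s := Set.Icc (-1:ℝ) 1) (fun x _ => (hd x).hasDerivWithinAt) (fun x hx => hb x hx)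
      (convex_Icc _ _) (Set.left_mem_Icc.mpr (by norm_num)) ht
    rw [h0, sub_zero, Real.norm_eq_abs, Real.norm_eq_abs] at this
    have h3 : |t - -1| ≤ 2 := by rw [abs_le]; constructor <;> linarith [ht.1, ht.2]
    nlinarith
  have b3 := abs_le.mp b2
  have e2 : (legS g N).eval t - g t = (legS h N).eval t - h t := by
    rw [e1, hh]; simp; ring
  rw [e2, abs_lt]
  constructor <;> linarith

theorem leg_uniform_complex (g g' : ℝ → ℂ) (hg' : Continuous g') (hg : ∀ x, HasDerivAt g (g' x) x) :
    TendstoUniformlyOn (fun N : ℕ => fun t : ℝ => ∑ n ∈ Finset.range N,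
      ((2*(n:ℂ)+1)/2 * ∫ z in (-1:ℝ)..1, g z * (((legendreP n).eval z : ℝ) : ℂ))
        * (((legendreP n).eval t : ℝ) : ℂ)) g atTop (Set.Icc (-1) 1) := by
  have hgc : Continuous g := continuous_iff_continuousAt.mpr fun x => (hg x).continuousAt
  have hre : ∀ x, HasDerivAt (fun x => (g x).re) ((g' x).re) x := fun x =>
    (Complex.reCLM.hasFDerivAt.comp_hasDerivAt x (hg x))
  have him : ∀ x, HasDerivAt (fun x => (g x).im) ((g' x).im) x := fun x =>
    (Complex.imCLM.hasFDerivAt.comp_hasDerivAt x (hg x))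
  have hInt : ∀ n, IntervalIntegrable (fun z => g z * (((legendreP n).eval z : ℝ) : ℂ)) volume (-1) 1 :=
    fun n => Continuous.intervalIntegrable (by fun_prop) _ _
  have ere : ∀ n, (∫ z in (-1:ℝ)..1, g z * (((legendreP n).eval z : ℝ) : ℂ)).re
      = legC (fun x => (g x).re) n := by
    intro n
    have := Complex.reCLM.intervalIntegral_comp_comm (hInt n)
    simp only [Complex.reCLM_apply] at this
    rw [← this, legC]
    congr 1; ext x; simp
  have eim : ∀ n, (∫ z in (-1:ℝ)..1, g z * (((legendreP n).eval z : ℝ) : ℂ)).im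
      = legC (fun x => (g x).im) n := by
    intro n
    have := Complex.imCLM.intervalIntegral_comp_comm (hInt n)
    simp only [Complex.imCLM_apply] at this
    rw [← this, legC]
    congr 1; ext x; simp
  have ec : ∀ n, (∫ z in (-1:ℝ)..1, g z * (((legendreP n).eval z : ℝ) : ℂ))
      = (legC (fun x => (g x).re) n : ℂ) + (legC (fun x => (g x).im) n : ℂ) * Complex.I := by
    intro n
    rw [← ere, ← eim, Complex.re_add_im]
  rw [Metric.tendstoUniformlyOn_iff]
  intro ε hε
  obtain ⟨N1, hN1⟩ := leg_uniform _ _ (Complex.continuous_re.comp hg') hre (ε/2) (by positivity)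
  obtain ⟨N2, hN2⟩ := leg_uniform _ _ (Complex.continuous_im.comp hg') him (ε/2) (by positivity)
  filter_upwards [eventually_ge_atTop (max N1 N2)] with N hN t ht
  have h1 := hN1 N (le_of_max_le_left hN) t ht
  have h2 := hN2 N (le_of_max_le_right hN) t ht
  have e : (∑ n ∈ Finset.range N,
      ((2*(n:ℂ)+1)/2 * ∫ z in (-1:ℝ)..1, g z * (((legendreP n).eval z : ℝ) : ℂ))
        * (((legendreP n).eval t : ℝ) : ℂ))
      = (((legS (fun x => (g x).re) N).eval t : ℝ) : ℂ)
        + (((legS (fun x => (g x).im) N).eval t : ℝ) : ℂ) * Complex.I := by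
    simp only [legS, Polynomial.eval_finsetSum, Complex.ofReal_sum, Finset.sum_mul]
    rw [← Finset.sum_add_distrib]
    apply Finset.sum_congr rfl
    intro n _
    rw [ec]
    simp only [Polynomial.eval_mul, Polynomial.eval_C]
    push_cast
    ring
  rw [dist_comm, e, dist_eq_norm]
  have e3 : (((legS (fun x => (g x).re) N).eval t : ℝ) : ℂ)
        + (((legS (fun x => (g x).im) N).eval t : ℝ) : ℂ) * Complex.I - g t
      = (((legS (fun x => (g x).re) N).eval t - (g t).re : ℝ) : ℂ)
        + (((legS (fun x => (g x).im) N).eval t - (g t).im : ℝ) : ℂ) * Complex.I := by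
    conv_lhs => rw [← Complex.re_add_im (g t)]
    push_cast
    ring
  rw [e3]
  calc _ ≤ ‖(((legS (fun x => (g x).re) N).eval t - (g t).re : ℝ) : ℂ)‖
        + ‖(((legS (fun x => (g x).im) N).eval t - (g t).im : ℝ) : ℂ) * Complex.I‖ := norm_add_le _ _
    _ = |(legS (fun x => (g x).re) N).eval t - (g t).re|
        + |(legS (fun x => (g x).im) N).eval t - (g t).im| := by
        rw [norm_mul, Complex.norm_I, mul_one, Complex.norm_real, Complex.norm_real]; rfl
    _ < ε := by linarith

theorem param_deriv (G G1 : ℝ → ℝ → ℂ) (hG : Continuous (Function.uncurry G))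
    (hG1 : Continuous (Function.uncurry G1))
    (hd : ∀ x y, HasDerivAt (fun x => G x y) (G1 x y) x) (a c x : ℝ) :
    HasDerivAt (fun x => ∫ y in a..c, G x y) (∫ y in a..c, G1 x y) x := by
  obtain ⟨C, hC⟩ := ((isCompact_Icc (a := x-1) (b := x+1)).prod
    (isCompact_uIcc (a := a) (b := c))).exists_bound_of_continuousOn hG1.continuousOn
  have hGx : ∀ x, Continuous (G x) := fun x => hG.comp (by fun_prop : Continuous fun y => (x, y))
  have hG1x : ∀ x, Continuous (G1 x) := fun x => hG1.comp (by fun_prop : Continuous fun y => (x, y))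
  refine (intervalIntegral.hasDerivAt_integral_of_dominated_loc_of_deriv_le (F := G) (F' := G1)
    (bound := fun _ => C) (s := Set.Icc (x-1) (x+1)) (Icc_mem_nhds (by linarith) (by linarith)) ?_ ?_ ?_ ?_ ?_ ?_).2
  · exact Eventually.of_forall fun z => (hGx z).aestronglyMeasurable
  · exact (hGx x).intervalIntegrable _ _
  · exact (hG1x x).aestronglyMeasurable
  · refine Eventually.of_forall fun y hy z hz => ?_
    exact hC (z, y) ⟨hz, Set.uIoc_subset_uIcc hy⟩
  · simp
  · exact Eventually.of_forall fun y _ z _ => hd z y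

theorem leibniz (G G1 : ℝ → ℝ → ℂ) (hG : Continuous (Function.uncurry G))
    (hG1 : Continuous (Function.uncurry G1))
    (hd : ∀ x y, HasDerivAt (fun x => G x y) (G1 x y) x) (a x : ℝ) :
    HasDerivAt (fun x => ∫ y in a..x, G x y) (G x x + ∫ y in a..x, G1 x y) x := by
  have hGx : ∀ x, Continuous (G x) := fun x => hG.comp (by fun_prop : Continuous fun y => (x, y))
  have e : (fun z => ∫ y in a..z, G z y) = fun z => (∫ y in x..z, G z y) + ∫ y in a..x, G z y := by
    ext z
    rw [add_comm, intervalIntegral.integral_add_adjacent_intervals] <;>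
    exact (hGx z).intervalIntegrable _ _
  rw [e]
  refine HasDerivAt.add ?_ (param_deriv G G1 hG hG1 hd a x x)
  rw [hasDerivAt_iff_isLittleO]
  rw [Asymptotics.isLittleO_iff]
  intro ε hε
  have hc : ContinuousAt (Function.uncurry G) (x, x) := hG.continuousAt
  rw [Metric.continuousAt_iff] at hc
  obtain ⟨δ, hδ, h⟩ := hc ε hε
  filter_upwards [Metric.ball_mem_nhds x hδ] with z hz
  have e2 : (∫ y in x..z, G z y) - (∫ y in x..x, G x y) - (z - x) • G x x
      = ∫ y in x..z, (G z y - G x x) := by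
    rw [intervalIntegral.integral_sub ((hGx z).intervalIntegrable _ _) (by simp)]
    simp
  rw [e2, Real.norm_eq_abs]
  apply intervalIntegral.norm_integral_le_of_norm_le_const
  intro y hy
  have hz' : |z - x| < δ := hz
  have hy' : |y - x| < δ := by
    refine lt_of_le_of_lt ?_ hz'
    have := Set.uIoc_subset_uIcc hy
    exact Set.abs_sub_left_of_mem_uIcc this
  have := h (x := (z, y)) (by
    rw [Prod.dist_eq]; exact max_lt hz' hy')
  rw [dist_eq_norm] at this
  exact this.le

theorem cont_double (Q : ℝ × ℝ → ℂ) (hQ : Continuous Q) :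
    Continuous (fun p : ℝ × ℝ => ∫ α in (0:ℝ)..p.1, ∫ β in (0:ℝ)..p.2, Q (α, β)) := by
  refine intervalIntegral.continuous_parametric_intervalIntegral_of_continuous
    (f := fun (p : ℝ × ℝ) α => ∫ β in (0:ℝ)..p.2, Q (α, β)) ?_ continuous_fst
  refine intervalIntegral.continuous_parametric_intervalIntegral_of_continuous
    (f := fun (r : (ℝ × ℝ) × ℝ) β => Q (r.2, β)) ?_ (by fun_prop)
  exact hQ.comp (by fun_prop)

theorem goursat_fixed (b : ℝ) (hb : 0 < b) (q : ℝ → ℂ) (hq : Continuous q) (M : ℝ)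
    (hM : ∀ x, ‖q x‖ ≤ M) :
    ∃ H : ℝ × ℝ → ℂ, Continuous H ∧ ∀ ξ η : ℝ, |ξ| ≤ b → |η| ≤ b →
      H (ξ, η) = (1/2) * (∫ s in (0:ℝ)..ξ, q s)
        + ∫ α in (0:ℝ)..ξ, ∫ β in (0:ℝ)..η, q (α + β) * H (α, β) := by
  have hM0 : 0 ≤ M := (norm_nonneg _).trans (hM 0)
  set cl : ℝ → ℝ := fun x => max (-b) (min b x) with hcl
  have hclc : Continuous cl := by fun_prop
  have hclb : ∀ x, |cl x| ≤ b := by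
    intro x
    rw [abs_le]
    exact ⟨le_max_left _ _, max_le (by linarith) (min_le_left _ _)⟩
  have hcleq : ∀ x, |x| ≤ b → cl x = x := by
    intro x hx
    rw [abs_le] at hx
    simp only [hcl]
    rw [min_eq_right hx.2, max_eq_right hx.1]
  have hex : ∀ h : BoundedContinuousFunction (ℝ × ℝ) ℂ, ∃ g : BoundedContinuousFunction (ℝ × ℝ) ℂ,
      ∀ p : ℝ × ℝ, g p = (1/2) * (∫ s in (0:ℝ)..(cl p.1), q s)
        + ∫ α in (0:ℝ)..(cl p.1), ∫ β in (0:ℝ)..(cl p.2), q (α + β) * h (α, β) := by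
    intro h
    set Ψ : ℝ × ℝ → ℂ := fun p => (1/2) * (∫ s in (0:ℝ)..p.1, q s)
        + ∫ α in (0:ℝ)..p.1, ∫ β in (0:ℝ)..p.2, q (α + β) * h (α, β) with hΨ
    have hΨc : Continuous Ψ := by
      have h2 := cont_double (fun p => q (p.1 + p.2) * h p) (by fun_prop)
      refine Continuous.add (continuous_const.mul ?_) h2
      exact (intervalIntegral.continuous_primitive (fun a b => hq.intervalIntegrable a b) 0).comp
        continuous_fst
    obtain ⟨C, hC⟩ := ((isCompact_Icc (a := -b) (b := b)).prod
      (isCompact_Icc (a := -b) (b := b))).exists_bound_of_continuousOn hΨc.continuousOn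
    refine ⟨BoundedContinuousFunction.ofNormedAddCommGroup (fun p => Ψ (cl p.1, cl p.2))
      (hΨc.comp (by fun_prop)) C ?_, fun p => rfl⟩
    intro p
    exact hC _ ⟨abs_le.mp (hclb _), abs_le.mp (hclb _)⟩
  choose Φ hΦ using hex
  have hdiff : ∀ n : ℕ, ∀ h k : BoundedContinuousFunction (ℝ × ℝ) ℂ, ∀ p : ℝ × ℝ,
      ‖(Φ^[n] h) p - (Φ^[n] k) p‖ ≤ (M * b * |cl p.1|)^n / n.factorial * dist h k := by
    intro n h k
    induction n with
    | zero =>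
      intro p
      simp
      rw [← dist_eq_norm]
      exact BoundedContinuousFunction.dist_coe_le_dist p
    | succ n ih =>
      intro p
      rw [Function.iterate_succ_apply', Function.iterate_succ_apply', hΦ, hΦ]
      set h1 := Φ^[n] h
      set k1 := Φ^[n] k
      set d := dist h k
      have hd0 : 0 ≤ d := dist_nonneg
      have hc1 : ∀ (w : BoundedContinuousFunction (ℝ × ℝ) ℂ) (α : ℝ),
          Continuous fun β => q (α + β) * w (α, β) := fun w α => by fun_prop
      have hc2 : ∀ (w : BoundedContinuousFunction (ℝ × ℝ) ℂ) (η : ℝ),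
          Continuous fun α => ∫ β in (0:ℝ)..η, q (α + β) * w (α, β) := fun w η => by
        refine intervalIntegral.continuous_parametric_intervalIntegral_of_continuous
          (f := fun α β => q (α + β) * w (α, β)) ?_ continuous_const
        fun_prop
      rw [add_sub_add_left_eq_sub, ← intervalIntegral.integral_sub
        ((hc2 _ _).intervalIntegrable _ _) ((hc2 _ _).intervalIntegrable _ _)]
      have hin : ∀ α : ℝ, ‖(∫ β in (0:ℝ)..(cl p.2), q (α + β) * h1 (α, β))
          - ∫ β in (0:ℝ)..(cl p.2), q (α + β) * k1 (α, β)‖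
          ≤ (M * b) * ((M*b)^n * |α - 0|^n / n.factorial * d) := by
        intro α
        rw [← intervalIntegral.integral_sub ((hc1 _ _).intervalIntegrable _ _)
          ((hc1 _ _).intervalIntegrable _ _)]
        have hclα : |cl α| ≤ |α| := by
          rcases le_or_gt |α| b with h | h
          · rw [hcleq α h]
          · exact (hclb α).trans h.le
        have := intervalIntegral.norm_integral_le_of_norm_le_const (a := 0) (b := cl p.2)
          (f := fun β => q (α + β) * h1 (α, β) - q (α + β) * k1 (α, β))
          (C := M * ((M*b)^n * |α - 0|^n / n.factorial * d)) (by
            intro β _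
            rw [← mul_sub, norm_mul]
            refine mul_le_mul (hM _) ((ih (α, β)).trans ?_) (norm_nonneg _) hM0
            rw [mul_pow, sub_zero]
            gcongr)
        refine this.trans ?_
        have hb2 := hclb p.2
        rw [sub_zero (cl p.2)]
        calc _ ≤ M * ((M*b)^n * |α - 0|^n / n.factorial * d) * b := by gcongr
          _ = _ := by ring
      refine (intervalIntegral.norm_integral_le_integral_norm_uIoc).trans ?_
      have hcc : Continuous fun α : ℝ => (M * b) * ((M*b)^n * |α - 0|^n / n.factorial * d) := by
        fun_prop
      calc _ ≤ ∫ α in Set.uIoc 0 (cl p.1), (M * b) * ((M*b)^n * |α - 0|^n / n.factorial * d) := by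
            apply setIntegral_mono_on
            · exact (((hc2 _ _).sub (hc2 _ _)).norm.intervalIntegrable 0 (cl p.1)).def'
            · exact (hcc.intervalIntegrable 0 (cl p.1)).def'
            · exact measurableSet_uIoc
            · intro α _; exact hin α
        _ = ∫ α in Set.uIoc 0 (cl p.1), ((M*b)^(n+1) / n.factorial * d) * |α - 0|^n := by
            congr 1; ext α; ring
        _ = _ := by
            rw [integral_const_mul, integral_pow_abs_sub_uIoc, Nat.factorial_succ]
            push_cast
            rw [sub_zero]
            simp only [mul_pow]
            field_simp
  obtain ⟨n, hn⟩ := ((FloorSemiring.tendsto_pow_div_factorial_atTop (M * b * b)).eventually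
    (gt_mem_nhds (show (0:ℝ) < 1/2 by norm_num))).exists
  have hcontr : ContractingWith (1/2 : NNReal) Φ^[n] := by
    refine ⟨by rw [div_lt_one] <;> norm_num, LipschitzWith.of_dist_le_mul fun h k => ?_⟩
    rw [BoundedContinuousFunction.dist_le (by positivity)]
    intro p
    rw [dist_eq_norm]
    refine (hdiff n h k p).trans ?_
    have : (M * b * |cl p.1|)^n / n.factorial ≤ 1/2 := by
      refine le_trans ?_ hn.le
      have := hclb p.1
      gcongr
    push_cast
    gcongr
  have hfix := hcontr.isFixedPt_fixedPoint_iterate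
  set H := hcontr.fixedPoint Φ^[n]
  refine ⟨H, H.continuous, fun ξ η hξ hη => ?_⟩
  have := hΦ H (ξ, η)
  rw [hfix.eq] at this
  rw [this]
  simp only [hcleq ξ hξ, hcleq η hη]

theorem kernel_exists (b : ℝ) (hb : 0 < b) (q : ℝ → ℂ) (hq : Continuous q) (M : ℝ)
    (hM : ∀ x, ‖q x‖ ≤ M) :
    ∃ H L Q : ℝ → ℝ → ℂ, Continuous (Function.uncurry H) ∧ Continuous (Function.uncurry L) ∧
      Continuous (Function.uncurry Q) ∧ (∀ ξ η, HasDerivAt (fun η => H ξ η) (L ξ η) η) ∧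
      (∀ ξ η, HasDerivAt (fun ξ => L ξ η) (Q ξ η) ξ) ∧ (∀ η, L 0 η = 0) ∧
      (∀ ξ, HasDerivAt (fun ξ => H ξ 0) (q ξ / 2) ξ) ∧ H 0 0 = 0 ∧
      (∀ ξ η, |ξ| ≤ b → |η| ≤ b → Q ξ η = q (ξ + η) * H ξ η) ∧
      (∀ x, ∃ g' : ℝ → ℂ, Continuous g' ∧ ∀ ξ, HasDerivAt (fun ξ => H ξ (x - ξ)) (g' ξ) ξ) := by
  obtain ⟨H0, hH0, hfix⟩ := goursat_fixed b hb q hq M hM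
  set Q : ℝ → ℝ → ℂ := fun α β => q (α + β) * H0 (α, β) with hQ
  have hQc : Continuous (Function.uncurry Q) := by
    show Continuous fun p : ℝ × ℝ => q (p.1 + p.2) * H0 (p.1, p.2)
    fun_prop
  have hQc' : ∀ {X : Type} [TopologicalSpace X] {u v : X → ℝ}, Continuous u → Continuous v →
      Continuous fun x => Q (u x) (v x) := fun hu hv => by
    exact hQc.comp (hu.prodMk hv)
  have hq1 : ∀ ξ, HasDerivAt (fun ξ => (1/2) * ∫ s in (0:ℝ)..ξ, q s) (q ξ / 2) ξ := by
    intro ξ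
    have := ((hq.integral_hasStrictDerivAt 0 ξ).hasDerivAt).const_mul (1/2 : ℂ)
    have e : q ξ / 2 = (1/2) * q ξ := by ring
    rw [e]; exact this
  have hin : ∀ α η, HasDerivAt (fun η => ∫ β in (0:ℝ)..η, Q α β) (Q α η) η := fun α η =>
    ((hQc' continuous_const continuous_id : Continuous (fun β => Q α β)).integral_hasStrictDerivAt 0 η).hasDerivAt
  have hinc : Continuous (fun p : ℝ × ℝ => ∫ β in (0:ℝ)..p.1, Q p.2 β) :=
    intervalIntegral.continuous_parametric_intervalIntegral_of_continuous
      (f := fun (p : ℝ × ℝ) β => Q p.2 β)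
      (hQc' (X := (ℝ × ℝ) × ℝ) (continuous_snd.comp continuous_fst) continuous_snd) continuous_fst
  refine ⟨fun ξ η => (1/2) * (∫ s in (0:ℝ)..ξ, q s) + ∫ α in (0:ℝ)..ξ, ∫ β in (0:ℝ)..η, Q α β,
    fun ξ η => ∫ α in (0:ℝ)..ξ, Q α η, Q, ?_, ?_, hQc, ?_, ?_, ?_, ?_, ?_, ?_, ?_⟩
  · refine Continuous.add (continuous_const.mul ?_) (cont_double (Function.uncurry Q) hQc)
    exact (intervalIntegral.continuous_primitive (fun a b => hq.intervalIntegrable a b) 0).comp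
        continuous_fst
  · exact intervalIntegral.continuous_parametric_intervalIntegral_of_continuous
      (f := fun (p : ℝ × ℝ) α => Q α p.2)
      (hQc' (X := (ℝ × ℝ) × ℝ) continuous_snd (continuous_snd.comp continuous_fst)) continuous_fst
  · intro ξ η
    refine HasDerivAt.const_add _ ?_
    exact param_deriv (fun η α => ∫ β in (0:ℝ)..η, Q α β) (fun η α => Q α η) hinc
      (hQc' continuous_snd continuous_fst) (fun η α => hin α η) 0 ξ η
  · intro ξ η
    exact ((hQc' continuous_id continuous_const : Continuous (fun α => Q α η)).integral_hasStrictDerivAt 0 ξ).hasDerivAt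
  · intro η; simp
  · intro ξ
    simpa using hq1 ξ
  · simp
  · intro ξ η hξ hη
    rw [hQ]
    simp only
    rw [← hfix ξ η hξ hη]
  · intro x
    refine ⟨fun ξ => q ξ / 2 + ((∫ β in (0:ℝ)..(x-ξ), Q ξ β) + ∫ α in (0:ℝ)..ξ, - Q α (x-ξ)), ?_, ?_⟩
    · refine Continuous.add (by fun_prop) (Continuous.add ?_ ?_)
      · exact hinc.comp (by fun_prop : Continuous fun ξ : ℝ => (x - ξ, ξ))
      · exact intervalIntegral.continuous_parametric_intervalIntegral_of_continuous
          (f := fun (ξ : ℝ) α => - Q α (x - ξ))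
          (hQc' (X := ℝ × ℝ) continuous_snd (continuous_const.sub continuous_fst)).neg continuous_id
    · intro ξ
      refine (hq1 ξ).add ?_
      refine leibniz (fun ξ α => ∫ β in (0:ℝ)..(x-ξ), Q α β) (fun ξ α => - Q α (x-ξ)) ?_ ?_ ?_ 0 ξ
      · exact hinc.comp (by fun_prop : Continuous fun p : ℝ × ℝ => (x - p.1, p.2))
      · exact (hQc' (X := ℝ × ℝ) continuous_snd (continuous_const.sub continuous_fst)).neg
      · intro ξ α
        have h1 : HasDerivAt (fun ξ : ℝ => x - ξ) (-1) ξ := (hasDerivAt_id' ξ).const_sub x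
        have := (hin α (x - ξ)).scomp ξ h1
        rw [neg_one_smul] at this; exact this

/-- transmutation integral in characteristic coordinates -/
def FT (H : ℝ → ℝ → ℂ) (w : ℝ → ℂ) (x : ℝ) : ℂ := 2 * ∫ ξ in (0:ℝ)..x, H ξ (x - ξ) * w (2 * ξ - x)

theorem FT_eq (H : ℝ → ℝ → ℂ) (w : ℝ → ℂ) (x : ℝ) :
    (∫ t in (-x)..x, H ((x+t)/2) ((x-t)/2) * w t) = FT H w x := by
  have h := intervalIntegral.integral_comp_mul_sub (a := 0) (b := x)
    (fun t => H ((x+t)/2) ((x-t)/2) * w t) (two_ne_zero (α := ℝ)) x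
  have e : (fun ξ : ℝ => H ξ (x - ξ) * w (2 * ξ - x)) =
      fun ξ => (fun t => H ((x+t)/2) ((x-t)/2) * w t) (2 * ξ - x) := by
    funext ξ
    have e1 : (x + (2 * ξ - x))/2 = ξ := by ring
    have e2 : (x - (2 * ξ - x))/2 = x - ξ := by ring
    simp only [e1, e2]
  unfold FT
  rw [e, h]
  have e3 : 2 * 0 - x = -x := by ring
  have e4 : 2 * x - x = x := by ring
  rw [e3, e4, Complex.real_smul]
  push_cast
  ring

theorem FT_deriv (H L : ℝ → ℝ → ℂ) (hH : Continuous (Function.uncurry H))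
    (hL : Continuous (Function.uncurry L))
    (hHL : ∀ ξ η, HasDerivAt (fun η => H ξ η) (L ξ η) η)
    (u u' : ℝ → ℂ) (hu' : Continuous u') (hu : ∀ x, HasDerivAt u (u' x) x) (x : ℝ) :
    HasDerivAt (FT H u) (2 * H x 0 * u x + FT L u x - FT H u' x) x := by
  have huc : Continuous u := continuous_iff_continuousAt.2 fun x => (hu x).continuousAt
  have hHc : Continuous fun p : ℝ × ℝ => H p.2 (p.1 - p.2) :=
    hH.comp (by fun_prop : Continuous fun p : ℝ × ℝ => (p.2, p.1 - p.2))
  have hLc : Continuous fun p : ℝ × ℝ => L p.2 (p.1 - p.2) :=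
    hL.comp (by fun_prop : Continuous fun p : ℝ × ℝ => (p.2, p.1 - p.2))
  have key := leibniz (fun x ξ => H ξ (x - ξ) * u (2 * ξ - x))
    (fun x ξ => L ξ (x - ξ) * u (2 * ξ - x) - H ξ (x - ξ) * u' (2 * ξ - x))
    (hHc.mul (huc.comp (by fun_prop)))
    ((hLc.mul (huc.comp (by fun_prop))).sub (hHc.mul (hu'.comp (by fun_prop))))
    (by
      intro x ξ
      have h1 : HasDerivAt (fun x : ℝ => x - ξ) 1 x := (hasDerivAt_id' x).sub_const ξ
      have h2 : HasDerivAt (fun x : ℝ => 2 * ξ - x) (-1) x := (hasDerivAt_id' x).const_sub _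
      have h3 := (hHL ξ (x - ξ)).scomp x h1
      have h4 := (hu (2 * ξ - x)).scomp x h2
      rw [one_smul] at h3
      rw [neg_one_smul] at h4
      have h5 := h3.mul h4
      refine h5.congr_deriv ?_
      simp only [Function.comp]
      ring) 0 x
  have key2 := key.const_mul (2:ℂ)
  refine key2.congr_deriv ?_
  have i1 : IntervalIntegrable (fun ξ => L ξ (x - ξ) * u (2 * ξ - x)) volume 0 x :=
    Continuous.intervalIntegrable ((hLc.comp (by fun_prop : Continuous fun ξ : ℝ => (x, ξ))).mul
      (huc.comp (by fun_prop : Continuous fun ξ : ℝ => 2 * ξ - x))) _ _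
  have i2 : IntervalIntegrable (fun ξ => H ξ (x - ξ) * u' (2 * ξ - x)) volume 0 x :=
    Continuous.intervalIntegrable ((hHc.comp (by fun_prop : Continuous fun ξ : ℝ => (x, ξ))).mul
      (hu'.comp (by fun_prop : Continuous fun ξ : ℝ => 2 * ξ - x))) _ _
  rw [intervalIntegral.integral_sub i1 i2]
  unfold FT
  have e4 : 2 * x - x = x := by ring
  rw [e4, sub_self]
  ring

theorem FT_reflect (H : ℝ → ℝ → ℂ) (w : ℝ → ℂ) (x : ℝ) :
    FT H w x = 2 * ∫ η in (0:ℝ)..x, H (x - η) η * w (x - 2 * η) := by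
  have h := intervalIntegral.integral_comp_sub_left (a := 0) (b := x)
    (fun ξ => H ξ (x - ξ) * w (2 * ξ - x)) x
  unfold FT
  rw [sub_zero, sub_self] at h
  rw [← h]
  congr 1
  refine intervalIntegral.integral_congr fun η _ => ?_
  have e1 : x - (x - η) = η := by ring
  have e2 : 2 * (x - η) - x = x - 2 * η := by ring
  simp only [e1, e2]

theorem FT_deriv' (L Q : ℝ → ℝ → ℂ) (hL : Continuous (Function.uncurry L))
    (hQ : Continuous (Function.uncurry Q))
    (hLQ : ∀ ξ η, HasDerivAt (fun ξ => L ξ η) (Q ξ η) ξ) (hL0 : ∀ η, L 0 η = 0)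
    (u u' : ℝ → ℂ) (hu' : Continuous u') (hu : ∀ x, HasDerivAt u (u' x) x) (x : ℝ) :
    HasDerivAt (FT L u) (FT Q u x + FT L u' x) x := by
  have huc : Continuous u := continuous_iff_continuousAt.2 fun x => (hu x).continuousAt
  have hLc : Continuous fun p : ℝ × ℝ => L (p.1 - p.2) p.2 :=
    hL.comp (by fun_prop : Continuous fun p : ℝ × ℝ => (p.1 - p.2, p.2))
  have hQc : Continuous fun p : ℝ × ℝ => Q (p.1 - p.2) p.2 :=
    hQ.comp (by fun_prop : Continuous fun p : ℝ × ℝ => (p.1 - p.2, p.2))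
  have key := leibniz (fun x η => L (x - η) η * u (x - 2 * η))
    (fun x η => Q (x - η) η * u (x - 2 * η) + L (x - η) η * u' (x - 2 * η))
    (hLc.mul (huc.comp (by fun_prop)))
    ((hQc.mul (huc.comp (by fun_prop))).add (hLc.mul (hu'.comp (by fun_prop))))
    (by
      intro x η
      have h1 : HasDerivAt (fun x : ℝ => x - η) 1 x := (hasDerivAt_id' x).sub_const η
      have h2 : HasDerivAt (fun x : ℝ => x - 2 * η) 1 x := (hasDerivAt_id' x).sub_const _
      have h3 := (hLQ (x - η) η).scomp x h1
      have h4 := (hu (x - 2 * η)).scomp x h2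
      rw [one_smul] at h3
      rw [one_smul] at h4
      exact h3.mul h4) 0 x
  have key2 := key.const_mul (2:ℂ)
  have e : FT L u = fun x => 2 * ∫ η in (0:ℝ)..x, L (x - η) η * u (x - 2 * η) :=
    funext fun x => FT_reflect L u x
  rw [e]
  refine key2.congr_deriv ?_
  have i1 : IntervalIntegrable (fun η => Q (x - η) η * u (x - 2 * η)) volume 0 x :=
    Continuous.intervalIntegrable ((hQc.comp (by fun_prop : Continuous fun ξ : ℝ => (x, ξ))).mul
      (huc.comp (by fun_prop : Continuous fun ξ : ℝ => x - 2 * ξ))) _ _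
  have i2 : IntervalIntegrable (fun η => L (x - η) η * u' (x - 2 * η)) volume 0 x :=
    Continuous.intervalIntegrable ((hLc.comp (by fun_prop : Continuous fun ξ : ℝ => (x, ξ))).mul
      (hu'.comp (by fun_prop : Continuous fun ξ : ℝ => x - 2 * ξ))) _ _
  rw [intervalIntegral.integral_add i1 i2, FT_reflect, FT_reflect, sub_self, hL0]
  ring

theorem FT_cont (H : ℝ → ℝ → ℂ) (hH : Continuous (Function.uncurry H)) (w : ℝ → ℂ)
    (hw : Continuous w) : Continuous (FT H w) := by
  refine continuous_const.mul ?_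
  exact intervalIntegral.continuous_parametric_intervalIntegral_of_continuous
    (f := fun (x : ℝ) ξ => H ξ (x - ξ) * w (2 * ξ - x))
    ((hH.comp (by fun_prop : Continuous fun p : ℝ × ℝ => (p.2, p.1 - p.2))).mul
      (hw.comp (by fun_prop : Continuous fun p : ℝ × ℝ => 2 * p.2 - p.1))) continuous_id

theorem FT_zero (H : ℝ → ℝ → ℂ) (w : ℝ → ℂ) : FT H w 0 = 0 := by simp [FT]

theorem FT_Q (b : ℝ) (q : ℝ → ℂ) (H Q : ℝ → ℝ → ℂ)
    (hQH : ∀ ξ η, |ξ| ≤ b → |η| ≤ b → Q ξ η = q (ξ + η) * H ξ η) (w : ℝ → ℂ) (x : ℝ)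
    (hx : |x| ≤ b) : FT Q w x = q x * FT H w x := by
  unfold FT
  rw [mul_left_comm]
  congr 1
  rw [← intervalIntegral.integral_const_mul]
  refine intervalIntegral.integral_congr fun ξ hξ => ?_
  have hξ' : |ξ| ≤ b ∧ |x - ξ| ≤ b := by
    rcases le_total 0 x with h | h
    · rw [uIcc_of_le h] at hξ
      rw [abs_le] at hx
      rw [abs_le, abs_le]
      exact ⟨⟨by linarith [hξ.1], by linarith [hξ.2]⟩, by linarith [hξ.2], by linarith [hξ.1]⟩
    · rw [uIcc_of_ge h] at hξ
      rw [abs_le] at hx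
      rw [abs_le, abs_le]
      exact ⟨⟨by linarith [hξ.1], by linarith [hξ.2]⟩, by linarith [hξ.2], by linarith [hξ.1]⟩
  have e : ξ + (x - ξ) = x := by ring
  simp only [hQH ξ (x - ξ) hξ'.1 hξ'.2, e]
  ring

theorem trans_main (b : ℝ) (q : ℝ → ℂ) (hq : Continuous q) (H L Q : ℝ → ℝ → ℂ)
    (hH : Continuous (Function.uncurry H)) (hL : Continuous (Function.uncurry L))
    (hQ : Continuous (Function.uncurry Q))
    (hHL : ∀ ξ η, HasDerivAt (fun η => H ξ η) (L ξ η) η)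
    (hLQ : ∀ ξ η, HasDerivAt (fun ξ => L ξ η) (Q ξ η) ξ) (hL0 : ∀ η, L 0 η = 0)
    (hH0 : ∀ ξ, HasDerivAt (fun ξ => H ξ 0) (q ξ / 2) ξ) (hH00 : H 0 0 = 0)
    (hQH : ∀ ξ η, |ξ| ≤ b → |η| ≤ b → Q ξ η = q (ξ + η) * H ξ η)
    (u u' u'' : ℝ → ℂ) (hu : ∀ x, HasDerivAt u (u' x) x) (hu' : ∀ x, HasDerivAt u' (u'' x) x)
    (hu'' : Continuous u'') :
    ∃ D1 D2 : ℝ → ℂ, (∀ x, HasDerivAt (FT H u) (D1 x) x) ∧ (∀ x, HasDerivAt D1 (D2 x) x) ∧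
      Continuous D2 ∧ D1 0 = 0 ∧
      ∀ x, |x| ≤ b → D2 x = q x * u x + q x * FT H u x + FT H u'' x := by
  have huc : Continuous u := continuous_iff_continuousAt.2 fun x => (hu x).continuousAt
  have huc' : Continuous u' := continuous_iff_continuousAt.2 fun x => (hu' x).continuousAt
  refine ⟨fun x => 2 * H x 0 * u x + FT L u x - FT H u' x,
    fun x => q x * u x + FT Q u x + FT H u'' x, FT_deriv H L hH hL hHL u u' huc' hu, ?_, ?_, ?_, ?_⟩
  · intro x
    have h1 := (((hH0 x).const_mul (2:ℂ)).mul (hu x)).add (FT_deriv' L Q hL hQ hLQ hL0 u u' huc' hu x)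
    have h2 := h1.sub (FT_deriv H L hH hL hHL u' u'' hu'' hu' x)
    refine h2.congr_deriv ?_
    ring
  · exact ((hq.mul huc).add (FT_cont Q hQ u huc)).add (FT_cont H hH u'' hu'')
  · simp [hH00, FT_zero]
  · intro x hx
    simp only [FT_Q b q H Q hQH u x hx]

theorem ext_cont (b : ℝ) (hb : 0 < b) (q : ℝ → ℂ) (hq : ContinuousOn q (Set.Icc (-b) b)) :
    ∃ p : ℝ → ℂ, Continuous p ∧ (∀ x ∈ Set.Icc (-b) b, p x = q x) ∧
      ∀ x, ∃ y ∈ Set.Icc (-b) b, p x = q y := by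
  have hle : -b ≤ b := by linarith
  refine ⟨Set.IccExtend hle (fun x => q x), ?_, ?_, ?_⟩
  · exact (continuousOn_iff_continuous_domRestrict.1 hq).Icc_extend'
  · intro x hx
    rw [Set.IccExtend_of_mem hle _ hx]
  · intro x
    exact ⟨_, (Set.projIcc (-b) b hle x).2, rfl⟩

theorem ext_bound (b : ℝ) (q : ℝ → ℂ) (hq : ContinuousOn q (Set.Icc (-b) b)) :
    ∃ M, ∀ x ∈ Set.Icc (-b) b, ‖q x‖ ≤ M :=
  isCompact_Icc.exists_bound_of_continuousOn hq

theorem ext_prim (b : ℝ) (hb : 0 < b) (u u' p : ℝ → ℂ)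
    (hu : ∀ x ∈ Set.Icc (-b) b, HasDerivAt u (u' x) x) (hp : Continuous p)
    (hpu : ∀ x ∈ Set.Icc (-b) b, p x = u' x) :
    ∃ v : ℝ → ℂ, (∀ x, HasDerivAt v (p x) x) ∧ ∀ x ∈ Set.Icc (-b) b, v x = u x := by
  refine ⟨fun x => u 0 + ∫ s in (0:ℝ)..x, p s, ?_, ?_⟩
  · intro x
    exact ((hp.integral_hasStrictDerivAt 0 x).hasDerivAt).const_add _
  · intro x hx
    have hsub : Set.uIcc 0 x ⊆ Set.Icc (-b) b :=
      Set.uIcc_subset_Icc ⟨by linarith, hb.le⟩ hx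
    have := intervalIntegral.integral_eq_sub_of_hasDerivAt (f := u) (f' := p) (a := 0) (b := x)
      (fun y hy => by rw [hpu y (hsub hy)]; exact hu y (hsub hy)) (hp.intervalIntegrable _ _)
    simp only [this]
    ring

theorem ext_C2 (b : ℝ) (hb : 0 < b) (u u' u'' : ℝ → ℂ)
    (hu : ∀ x ∈ Set.Icc (-b) b, HasDerivAt u (u' x) x)
    (hu' : ∀ x ∈ Set.Icc (-b) b, HasDerivAt u' (u'' x) x)
    (hu'' : ContinuousOn u'' (Set.Icc (-b) b)) :
    ∃ v v' v'' : ℝ → ℂ, (∀ x, HasDerivAt v (v' x) x) ∧ (∀ x, HasDerivAt v' (v'' x) x) ∧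
      Continuous v'' ∧ (∀ x ∈ Set.Icc (-b) b, v x = u x) ∧ (∀ x ∈ Set.Icc (-b) b, v' x = u' x) ∧
      (∀ x ∈ Set.Icc (-b) b, v'' x = u'' x) := by
  obtain ⟨v'', h1, h2, -⟩ := ext_cont b hb u'' hu''
  obtain ⟨v', h3, h4⟩ := ext_prim b hb u' u'' v'' hu' h1 h2
  obtain ⟨v, h5, h6⟩ := ext_prim b hb u u' v' hu
    (continuous_iff_continuousAt.2 fun x => (h3 x).continuousAt) h4
  exact ⟨v, v', v'', h5, h3, h1, h6, h4, h2⟩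

theorem zpow_cont (g : ℝ → ℂ) (hg : Continuous g) (h0 : ∀ x, g x ≠ 0) (m : ℤ) :
    Continuous fun x => ((g x)^2)^m :=
  (hg.pow 2).zpow₀ m fun x => Or.inl (pow_ne_zero 2 (h0 x))

theorem formalX_deriv (g : ℝ → ℂ) (hg : Continuous g) (h0 : ∀ x, g x ≠ 0) (n : ℕ) :
    Continuous (formalX g n) ∧ ∀ x, HasDerivAt (formalX g (n+1))
      ((n + 1 : ℂ) * (formalX g n x * ((g x) ^ 2) ^ ((-1 : ℤ) ^ (n + 1)))) x := by
  have step : ∀ n, Continuous (formalX g n) → ∀ x, HasDerivAt (formalX g (n+1))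
      ((n + 1 : ℂ) * (formalX g n x * ((g x) ^ 2) ^ ((-1 : ℤ) ^ (n + 1)))) x := by
    intro n hn x
    have hc := hn.mul (zpow_cont g hg h0 ((-1 : ℤ) ^ (n + 1)))
    exact ((hc.integral_hasStrictDerivAt 0 x).hasDerivAt).const_mul _
  have hcont : ∀ n, Continuous (formalX g n) := by
    intro n
    induction n with
    | zero => exact continuous_const
    | succ n ih => exact continuous_iff_continuousAt.2 fun x => (step n ih x).continuousAt
  exact ⟨hcont n, step n (hcont n)⟩

theorem formalXt_deriv (g : ℝ → ℂ) (hg : Continuous g) (h0 : ∀ x, g x ≠ 0) (n : ℕ) :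
    Continuous (formalXt g n) ∧ ∀ x, HasDerivAt (formalXt g (n+1))
      ((n + 1 : ℂ) * (formalXt g n x * ((g x) ^ 2) ^ ((-1 : ℤ) ^ n))) x := by
  have step : ∀ n, Continuous (formalXt g n) → ∀ x, HasDerivAt (formalXt g (n+1))
      ((n + 1 : ℂ) * (formalXt g n x * ((g x) ^ 2) ^ ((-1 : ℤ) ^ n))) x := by
    intro n hn x
    have hc := hn.mul (zpow_cont g hg h0 ((-1 : ℤ) ^ n))
    exact ((hc.integral_hasStrictDerivAt 0 x).hasDerivAt).const_mul _
  have hcont : ∀ n, Continuous (formalXt g n) := by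
    intro n
    induction n with
    | zero => exact continuous_const
    | succ n ih => exact continuous_iff_continuousAt.2 fun x => (step n ih x).continuousAt
  exact ⟨hcont n, step n (hcont n)⟩

theorem formalX_congr (b : ℝ) (hb : 0 < b) (f g : ℝ → ℂ) (h : ∀ x ∈ Set.Icc (-b) b, g x = f x)
    (n : ℕ) : ∀ x ∈ Set.Icc (-b) b, formalX g n x = formalX f n x := by
  induction n with
  | zero => intro x _; rfl
  | succ n ih =>
    intro x hx
    have hsub : Set.uIcc 0 x ⊆ Set.Icc (-b) b :=
      Set.uIcc_subset_Icc ⟨by linarith, hb.le⟩ hx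
    simp only [formalX]
    congr 1
    refine intervalIntegral.integral_congr fun s hs => ?_
    simp only [ih s (hsub hs), h s (hsub hs)]

theorem formalXt_congr (b : ℝ) (hb : 0 < b) (f g : ℝ → ℂ) (h : ∀ x ∈ Set.Icc (-b) b, g x = f x)
    (n : ℕ) : ∀ x ∈ Set.Icc (-b) b, formalXt g n x = formalXt f n x := by
  induction n with
  | zero => intro x _; rfl
  | succ n ih =>
    intro x hx
    have hsub : Set.uIcc 0 x ⊆ Set.Icc (-b) b :=
      Set.uIcc_subset_Icc ⟨by linarith, hb.le⟩ hx
    simp only [formalXt]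
    congr 1
    refine intervalIntegral.integral_congr fun s hs => ?_
    simp only [ih s (hsub hs), h s (hsub hs)]

/-- the factor of a formal power -/
def formalY (g : ℝ → ℂ) (k : ℕ) (x : ℝ) : ℂ := if Odd k then formalX g k x else formalXt g k x

theorem formalX_succ_zero (g : ℝ → ℂ) (n : ℕ) : formalX g (n+1) 0 = 0 := by simp [formalX]
theorem formalXt_succ_zero (g : ℝ → ℂ) (n : ℕ) : formalXt g (n+1) 0 = 0 := by simp [formalXt]

theorem formalY_struct (g : ℝ → ℂ) (hg : Continuous g) (h0 : ∀ x, g x ≠ 0) (k : ℕ) :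
    ∃ B : ℝ → ℂ, (∀ x, HasDerivAt (formalY g k) (B x / g x ^ 2) x) ∧
      (∀ x, HasDerivAt B ((k:ℂ) * ((k:ℂ) - 1) * formalY g (k-2) x * g x ^ 2) x) ∧
      B 0 = (if k = 1 then 1 else 0) ∧ formalY g k 0 = (if k = 0 then 1 else 0) := by
  match k with
  | 0 =>
    refine ⟨fun _ => 0, ?_, ?_, by simp, by simp [formalY, formalXt]⟩
    · intro x
      have e : formalY g 0 = fun _ => 1 := by funext x; simp [formalY, formalXt]
      rw [e, zero_div]
      exact hasDerivAt_const x _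
    · intro x
      simpa using hasDerivAt_const x (0:ℂ)
  | 1 =>
    refine ⟨fun _ => 1, ?_, ?_, by simp, by simp [formalY, formalX]⟩
    · intro x
      have e : formalY g 1 = formalX g 1 := by funext x; simp [formalY]
      rw [e]
      refine ((formalX_deriv g hg h0 0).2 x).congr_deriv ?_
      simp [formalX]
    · intro x
      simpa using hasDerivAt_const x (1:ℂ)
  | n + 2 =>
    rcases Nat.even_or_odd n with hn | hn
    · have hn2 : ¬ Odd (n+2) := by
        rw [Nat.not_odd_iff_even]; exact hn.add (by decide)
      have e : formalY g (n+2) = formalXt g (n+2) := by funext x; simp [formalY, hn2]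
      have e' : formalY g n = formalXt g n := by
        funext x; simp [formalY, Nat.not_odd_iff_even.2 hn]
      refine ⟨fun x => ((n:ℂ)+2) * formalXt g (n+1) x, ?_, ?_, ?_, ?_⟩
      · intro x
        rw [e]
        refine ((formalXt_deriv g hg h0 (n+1)).2 x).congr_deriv ?_
        rw [(hn.add_one).neg_one_pow, zpow_neg_one]
        push_cast
        ring
      · intro x
        refine (((formalXt_deriv g hg h0 n).2 x).const_mul ((n:ℂ)+2)).congr_deriv ?_
        rw [hn.neg_one_pow, zpow_one, Nat.add_sub_cancel, e']
        push_cast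
        ring
      · simp [formalXt_succ_zero]
      · rw [e]; simp [formalXt_succ_zero]
    · have hn2 : Odd (n+2) := hn.add_even (by decide)
      have e : formalY g (n+2) = formalX g (n+2) := by funext x; simp [formalY, hn2]
      have e' : formalY g n = formalX g n := by
        funext x; simp [formalY, hn]
      refine ⟨fun x => ((n:ℂ)+2) * formalX g (n+1) x, ?_, ?_, ?_, ?_⟩
      · intro x
        rw [e]
        refine ((formalX_deriv g hg h0 (n+1)).2 x).congr_deriv ?_
        rw [hn2.neg_one_pow, zpow_neg_one]
        push_cast
        ring
      · intro x
        refine (((formalX_deriv g hg h0 n).2 x).const_mul ((n:ℂ)+2)).congr_deriv ?_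
        rw [(hn.add_one).neg_one_pow, zpow_one, Nat.add_sub_cancel, e']
        push_cast
        ring
      · simp [formalX_succ_zero]
      · rw [e]; simp [formalX_succ_zero]

theorem const_on (b : ℝ) (hb : 0 < b) (w : ℝ → ℂ) (hw : ∀ x ∈ Set.Icc (-b) b, HasDerivAt w 0 x)
    (h0 : w 0 = 0) : ∀ x ∈ Set.Icc (-b) b, w x = 0 := by
  intro x hx
  have hsub : Set.uIcc 0 x ⊆ Set.Icc (-b) b :=
    Set.uIcc_subset_Icc ⟨by linarith, hb.le⟩ hx
  have := intervalIntegral.integral_eq_sub_of_hasDerivAt (f := w) (f' := fun _ => 0) (a := 0) (b := x)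
      (fun y hy => hw y (hsub hy)) (by simp)
  simpa [h0] using this.symm

theorem ode_unique (b : ℝ) (hb : 0 < b) (q : ℝ → ℂ) (f f' : ℝ → ℂ)
    (hf : ∀ x ∈ Set.Icc (-b) b, HasDerivAt f (f' x) x)
    (hf' : ∀ x ∈ Set.Icc (-b) b, HasDerivAt f' (q x * f x) x)
    (hfne : ∀ x ∈ Set.Icc (-b) b, f x ≠ 0) (y y' : ℝ → ℂ)
    (hy : ∀ x ∈ Set.Icc (-b) b, HasDerivAt y (y' x) x)
    (hy' : ∀ x ∈ Set.Icc (-b) b, HasDerivAt y' (q x * y x) x) (h0 : y 0 = 0) (h0' : y' 0 = 0) :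
    ∀ x ∈ Set.Icc (-b) b, y x = 0 := by
  have hW := const_on b hb (fun x => y' x * f x - y x * f' x) (by
    intro x hx
    refine (((hy' x hx).mul (hf x hx)).sub ((hy x hx).mul (hf' x hx))).congr_deriv ?_
    ring) (by simp [h0, h0'])
  have hR := const_on b hb (fun x => y x / f x) (by
    intro x hx
    refine ((hy x hx).div (hf x hx) (hfne x hx)).congr_deriv ?_
    rw [hW x hx, zero_div]) (by simp [h0])
  intro x hx
  have := hR x hx
  rw [div_eq_zero_iff] at this
  exact this.resolve_right (hfne x hx)

theorem formalPower_ode (b : ℝ) (hb : 0 < b) (q : ℝ → ℂ) (f f' : ℝ → ℂ)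
    (hf : ∀ x ∈ Set.Icc (-b) b, HasDerivAt f (f' x) x)
    (hf' : ∀ x ∈ Set.Icc (-b) b, HasDerivAt f' (q x * f x) x)
    (hf0 : f 0 = 1) (hf'0 : f' 0 = 0)
    (hfne : ∀ x ∈ Set.Icc (-b) b, f x ≠ 0) :
    ∃ φ φ' : ℕ → ℝ → ℂ, (∀ k, ∀ x ∈ Set.Icc (-b) b, φ k x = formalPower f k x) ∧
      (∀ k, ∀ x ∈ Set.Icc (-b) b, HasDerivAt (φ k) (φ' k x) x) ∧
      (∀ k, ∀ x ∈ Set.Icc (-b) b, HasDerivAt (φ' k)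
        (q x * φ k x + (k:ℂ) * ((k:ℂ) - 1) * φ (k-2) x) x) ∧
      (∀ k, φ k 0 = if k = 0 then 1 else 0) ∧ (∀ k, φ' k 0 = if k = 1 then 1 else 0) := by
  obtain ⟨g, hg, hgf, hgr⟩ := ext_cont b hb f (fun x hx => (hf x hx).continuousAt.continuousWithinAt)
  have hg0 : ∀ x, g x ≠ 0 := by
    intro x
    obtain ⟨y, hy, e⟩ := hgr x
    rw [e]; exact hfne y hy
  choose B hB1 hB2 hB3 hB4 using formalY_struct g hg hg0
  refine ⟨fun k x => f x * formalY g k x, fun k x => f' x * formalY g k x + B k x / f x,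
    ?_, ?_, ?_, ?_, ?_⟩
  · intro k x hx
    unfold formalPower formalY
    beta_reduce
    rw [formalX_congr b hb f g hgf k x hx, formalXt_congr b hb f g hgf k x hx]
    split_ifs <;> rfl
  · intro k x hx
    refine ((hf x hx).mul (hB1 k x)).congr_deriv ?_
    have := hfne x hx
    rw [hgf x hx]
    field_simp
  · intro k x hx
    refine (((hf' x hx).mul (hB1 k x)).add ((hB2 k x).div (hf x hx) (hfne x hx))).congr_deriv ?_
    have := hfne x hx
    rw [hgf x hx]
    field_simp
    ring
  · intro k
    simp [hf0, hB4]
  · intro k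
    simp [hf0, hf'0, hB3]

theorem pow_deriv (k : ℕ) (x : ℝ) :
    HasDerivAt (fun t : ℝ => (t:ℂ)^k) ((k:ℂ) * (x:ℂ)^(k-1)) x :=
  (hasDerivAt_pow k (x:ℂ)).comp_ofReal

theorem FT_const_mul (H : ℝ → ℝ → ℂ) (c : ℂ) (w : ℝ → ℂ) (x : ℝ) :
    FT H (fun t => c * w t) x = c * FT H w x := by
  unfold FT
  rw [mul_left_comm c]
  congr 1
  rw [← intervalIntegral.integral_const_mul]
  congr 1
  funext ξ
  ring

theorem formal_eq (b : ℝ) (hb : 0 < b) (q p : ℝ → ℂ) (hp : Continuous p)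
    (hpq : ∀ x ∈ Set.Icc (-b) b, p x = q x) (H L Q : ℝ → ℝ → ℂ)
    (hH : Continuous (Function.uncurry H)) (hL : Continuous (Function.uncurry L))
    (hQ : Continuous (Function.uncurry Q))
    (hHL : ∀ ξ η, HasDerivAt (fun η => H ξ η) (L ξ η) η)
    (hLQ : ∀ ξ η, HasDerivAt (fun ξ => L ξ η) (Q ξ η) ξ) (hL0 : ∀ η, L 0 η = 0)
    (hH0 : ∀ ξ, HasDerivAt (fun ξ => H ξ 0) (p ξ / 2) ξ) (hH00 : H 0 0 = 0)
    (hQH : ∀ ξ η, |ξ| ≤ b → |η| ≤ b → Q ξ η = p (ξ + η) * H ξ η)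
    (f f' : ℝ → ℂ)
    (hf : ∀ x ∈ Set.Icc (-b) b, HasDerivAt f (f' x) x)
    (hf' : ∀ x ∈ Set.Icc (-b) b, HasDerivAt f' (q x * f x) x)
    (hf0 : f 0 = 1) (hf'0 : f' 0 = 0)
    (hfne : ∀ x ∈ Set.Icc (-b) b, f x ≠ 0) (k : ℕ) :
    ∀ x ∈ Set.Icc (-b) b, formalPower f k x = (x:ℂ)^k + FT H (fun t => (t:ℂ)^k) x := by
  obtain ⟨φ, φ', h1, h2, h3, h4, h5⟩ := formalPower_ode b hb q f f' hf hf' hf0 hf'0 hfne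
  suffices h : ∀ k, ∀ x ∈ Set.Icc (-b) b, φ k x - ((x:ℂ)^k + FT H (fun t => (t:ℂ)^k) x) = 0 by
    intro x hx
    rw [← h1 k x hx]
    exact sub_eq_zero.1 (h k x hx)
  intro k
  induction k using Nat.strong_induction_on with
  | _ k ih =>
  have d1 : ∀ x : ℝ, HasDerivAt (fun t : ℝ => (t:ℂ)^k) ((k:ℂ) * (x:ℂ)^(k-1)) x := pow_deriv k
  have d2 : ∀ x : ℝ, HasDerivAt (fun t : ℝ => (k:ℂ) * (t:ℂ)^(k-1))
      ((k:ℂ) * ((k:ℂ) - 1) * (x:ℂ)^(k-2)) x := by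
    intro x
    refine ((pow_deriv (k-1) x).const_mul (k:ℂ)).congr_deriv ?_
    rcases k with _ | k
    · simp
    · have : k + 1 - 1 - 1 = k + 1 - 2 := by omega
      rw [this]
      push_cast [Nat.add_sub_cancel]
      ring
  obtain ⟨D1, D2, a1, a2, a3, a4, a5⟩ := trans_main b p hp H L Q hH hL hQ hHL hLQ hL0 hH0 hH00 hQH
    _ _ (fun x : ℝ => (k:ℂ) * ((k:ℂ) - 1) * (x:ℂ)^(k-2)) d1 d2 (by fun_prop)
  refine ode_unique b hb q f f' hf hf' hfne
    (fun x => φ k x - ((x:ℂ)^k + FT H (fun t => (t:ℂ)^k) x))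
    (fun x => φ' k x - ((k:ℂ) * (x:ℂ)^(k-1) + D1 x)) ?_ ?_ ?_ ?_
  · intro x hx
    exact (h2 k x hx).sub ((d1 x).add (a1 x))
  · intro x hx
    refine ((h3 k x hx).sub ((d2 x).add (a2 x))).congr_deriv ?_
    rw [a5 x (abs_le.2 hx), hpq x hx, FT_const_mul]
    have key : (k:ℂ) * ((k:ℂ) - 1) * (φ (k-2) x - ((x:ℂ)^(k-2) + FT H (fun t => (t:ℂ)^(k-2)) x)) = 0 := by
      match k, ih with
      | 0, _ => simp
      | 1, _ => simp
      | n + 2, ih =>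
        rw [Nat.add_sub_cancel, ih n (by omega) x hx, mul_zero]
    linear_combination key
  · rcases k with _ | k
    · simp [h4, FT_zero]
    · simp [h4, FT_zero]
  · rcases k with _ | _ | k
    · simp [h5, a4]
    · simp [h5, a4]
    · simp [h5, a4]

theorem cut_integral_pos (g : ℝ → ℂ) (c s : ℝ) (hc : 0 ≤ c) (hcs : c ≤ s) :
    (∫ t in (-s)..s, (if |t| ≤ |c| then g t else 0)) = ∫ t in (-c)..c, g t := by
  have e : (fun t => if |t| ≤ |c| then g t else 0) = (Set.Icc (-c) c).indicator g := by
    funext t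
    rw [abs_of_nonneg hc]
    simp only [Set.indicator, Set.mem_Icc, abs_le]
  rw [e, intervalIntegral.integral_of_le (by linarith), intervalIntegral.integral_of_le (by linarith),
    setIntegral_indicator measurableSet_Icc]
  rcases eq_or_lt_of_le hcs with h | h
  · subst h
    rw [Set.inter_eq_left.2 Set.Ioc_subset_Icc_self]
  · rw [Set.inter_eq_right.2, integral_Icc_eq_integral_Ioc]
    intro t ht
    exact ⟨by linarith [ht.1], by linarith [ht.2]⟩

theorem cut_integral (g : ℝ → ℂ) (c s : ℝ) (h : (0 ≤ c ∧ c ≤ s) ∨ (s ≤ c ∧ c ≤ 0)) :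
    (∫ t in (-s)..s, (if |t| ≤ |c| then g t else 0)) = ∫ t in (-c)..c, g t := by
  rcases h with ⟨h1, h2⟩ | ⟨h1, h2⟩
  · exact cut_integral_pos g c s h1 h2
  · have := cut_integral_pos g (-c) (-s) (by linarith) (by linarith)
    rw [abs_neg, neg_neg, neg_neg] at this
    rw [intervalIntegral.integral_symm, this, ← intervalIntegral.integral_symm]

/-- clamp to `[-b,b]` -/
def clampR (b s : ℝ) : ℝ := max (-b) (min b s)

theorem clampR_deriv (b : ℝ) (hb : 0 < b) (F : ℝ → ℂ) (D : ℂ) (x : ℝ) (hx : x ∈ Set.Icc (-b) b)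
    (hF : HasDerivAt F D x) :
    HasDerivAt (fun s => 2 * F (clampR b s) - F (2 * clampR b s - s)) D x := by
  have hin : ∀ s ∈ Set.Icc (-b) b, 2 * F (clampR b s) - F (2 * clampR b s - s) = F s := by
    intro s hs
    have e : clampR b s = s := by
      unfold clampR
      rw [min_eq_right hs.2, max_eq_right hs.1]
    have e2 : 2 * s - s = s := by ring
    rw [e, e2]; ring
  have hrefl : ∀ c : ℝ, HasDerivAt F D c → HasDerivAt (fun s => 2 * F c - F (2 * c - s)) D c := by
    intro c hc
    have h2 : HasDerivAt (fun s : ℝ => 2 * c - s) (-1) c := (hasDerivAt_id' c).const_sub _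
    have e : 2 * c - c = c := by ring
    have hc' : HasDerivAt F D (2 * c - c) := by rw [e]; exact hc
    have h3 := hc'.scomp c h2
    have h4 := h3.const_sub (2 * F c)
    refine h4.congr_deriv ?_
    simp
  rcases eq_or_lt_of_le hx.2 with h | h
  · subst h
    rw [← hasDerivWithinAt_univ, ← Set.Iic_union_Ici (a := x)]
    refine HasDerivWithinAt.union ?_ ?_
    · refine hF.hasDerivWithinAt.congr_of_eventuallyEq ?_ (hin x hx)
      have : ∀ᶠ s in 𝓝[Set.Iic x] x, s ∈ Set.Ioi (-x) :=
        nhdsWithin_le_nhds (Ioi_mem_nhds (by linarith))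
      filter_upwards [this, self_mem_nhdsWithin] with s hs1 hs2
      exact hin s ⟨le_of_lt hs1, hs2⟩
    · have : ∀ s ∈ Set.Ici x, 2 * F (clampR x s) - F (2 * clampR x s - s) =
          2 * F x - F (2 * x - s) := by
        intro s hs
        have e : clampR x s = x := by
          unfold clampR
          rw [min_eq_left hs, max_eq_right (by linarith)]
        rw [e]
      exact (hrefl x hF).hasDerivWithinAt.congr this (this x Set.self_mem_Ici)
  · rcases eq_or_lt_of_le hx.1 with h' | h'
    · subst h'
      rw [← hasDerivWithinAt_univ, ← Set.Iic_union_Ici (a := -b)]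
      refine HasDerivWithinAt.union ?_ ?_
      · have : ∀ s ∈ Set.Iic (-b), 2 * F (clampR b s) - F (2 * clampR b s - s) =
            2 * F (-b) - F (2 * (-b) - s) := by
          intro s hs
          have hs' : s ≤ -b := hs
          have e : clampR b s = -b := by
            unfold clampR
            rw [min_eq_right (by linarith), max_eq_left hs']
          rw [e]
        exact (hrefl (-b) hF).hasDerivWithinAt.congr this (this _ Set.self_mem_Iic)
      · refine hF.hasDerivWithinAt.congr_of_eventuallyEq ?_ (hin _ hx)
        have : ∀ᶠ s in 𝓝[Set.Ici (-b)] (-b), s ∈ Set.Iio b :=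
          nhdsWithin_le_nhds (Iio_mem_nhds h)
        filter_upwards [this, self_mem_nhdsWithin] with s hs1 hs2
        exact hin s ⟨hs2, le_of_lt hs1⟩
    · refine hF.congr_of_eventuallyEq ?_
      filter_upwards [Icc_mem_nhds h' h] with s hs
      exact hin s hs

/-- the kernel, extended beyond `[-b,b]` by odd reflection of the operator -/
def kerK (b : ℝ) (H : ℝ → ℝ → ℂ) (s t : ℝ) : ℂ :=
  2 * (if |t| ≤ |clampR b s| then H ((clampR b s + t)/2) ((clampR b s - t)/2) else 0) -
    (if |t| ≤ |2 * clampR b s - s| then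
      H ((2 * clampR b s - s + t)/2) ((2 * clampR b s - s - t)/2) else 0)

theorem kerK_eq (b : ℝ) (H : ℝ → ℝ → ℂ) (s t : ℝ) (hs : |s| ≤ b) (ht : |t| ≤ |s|) :
    kerK b H s t = H ((s+t)/2) ((s-t)/2) := by
  have e : clampR b s = s := by
    unfold clampR
    rw [min_eq_right (abs_le.1 hs).2, max_eq_right (abs_le.1 hs).1]
  have e2 : 2 * s - s = s := by ring
  unfold kerK
  rw [e, e2, if_pos ht]
  ring

theorem int_eq_FT (H : ℝ → ℝ → ℂ) (u v : ℝ → ℂ) (b c : ℝ) (hc : |c| ≤ b)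
    (huv : ∀ x ∈ Set.Icc (-b) b, v x = u x) :
    (∫ t in (-c)..c, H ((c+t)/2) ((c-t)/2) * u t) = FT H v c := by
  rw [← FT_eq]
  refine intervalIntegral.integral_congr fun t ht => ?_
  have hc2 := abs_le.1 hc
  have := Set.uIcc_subset_Icc (a₂ := -b) (b₂ := b) (a₁ := -c) (b₁ := c)
    ⟨by linarith, by linarith⟩ hc2 ht
  simp only [huv t this]

theorem clampR_cases (b s : ℝ) (hb : 0 < b) (hs : |s| < 2 * b) :
    |clampR b s| ≤ b ∧ |2 * clampR b s - s| ≤ b ∧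
    ((0 ≤ clampR b s ∧ clampR b s ≤ s) ∨ (s ≤ clampR b s ∧ clampR b s ≤ 0)) ∧
    ((0 ≤ 2 * clampR b s - s ∧ 2 * clampR b s - s ≤ s) ∨
      (s ≤ 2 * clampR b s - s ∧ 2 * clampR b s - s ≤ 0)) := by
  have hs2 := abs_lt.1 hs
  rcases le_total s b with h | h
  · rcases le_total (-b) s with h' | h'
    · have e : clampR b s = s := by
        unfold clampR
        rw [min_eq_right h, max_eq_right h']
      rw [e, abs_le, abs_le]
      refine ⟨⟨h', h⟩, ⟨by linarith, by linarith⟩, ?_, ?_⟩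
      · rcases le_total 0 s with h0 | h0
        · left; exact ⟨h0, le_rfl⟩
        · right; exact ⟨le_rfl, h0⟩
      · rcases le_total 0 s with h0 | h0
        · left; constructor <;> linarith
        · right; constructor <;> linarith
    · have e : clampR b s = -b := by
        unfold clampR
        rw [min_eq_right h, max_eq_left h']
      rw [e, abs_le, abs_le]
      refine ⟨⟨le_rfl, by linarith⟩, ⟨by linarith, by linarith⟩, Or.inr ⟨by linarith, by linarith⟩,
        Or.inr ⟨by linarith, by linarith⟩⟩
  · have e : clampR b s = b := by
      unfold clampR
      rw [min_eq_left h, max_eq_right (by linarith)]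
    rw [e, abs_le, abs_le]
    refine ⟨⟨by linarith, le_rfl⟩, ⟨by linarith, by linarith⟩, Or.inl ⟨by linarith, by linarith⟩,
        Or.inl ⟨by linarith, by linarith⟩⟩

theorem cut_integrable (g : ℝ → ℂ) (b c s : ℝ) (hc : |c| ≤ b) (hg : ContinuousOn g (Set.Icc (-b) b)) :
    IntervalIntegrable (fun t => if |t| ≤ |c| then g t else 0) volume (-s) s := by
  have e : (fun t => if |t| ≤ |c| then g t else 0) = (Set.Icc (-|c|) |c|).indicator g := by
    funext t
    simp only [Set.indicator, Set.mem_Icc, abs_le]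
  rw [e]
  have h1 : IntegrableOn g (Set.Icc (-|c|) |c|) :=
    (hg.mono (Set.Icc_subset_Icc (by linarith) hc)).integrableOn_Icc
  exact (h1.integrable_indicator measurableSet_Icc).intervalIntegrable

theorem kerK_int (b : ℝ) (hb : 0 < b) (H : ℝ → ℝ → ℂ) (hH : Continuous (Function.uncurry H))
    (u v : ℝ → ℂ) (hv : Continuous v)
    (huv : ∀ x ∈ Set.Icc (-b) b, v x = u x) (s : ℝ) (hs : |s| < 2 * b) :
    (∫ t in (-s)..s, kerK b H s t * u t) =
      2 * FT H v (clampR b s) - FT H v (2 * clampR b s - s) := by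
  obtain ⟨h1, h2, h3, h4⟩ := clampR_cases b s hb hs
  set c := clampR b s with hc
  set r := 2 * c - s with hr
  have e : (fun t => kerK b H s t * u t) = fun t =>
      2 * (if |t| ≤ |c| then H ((c+t)/2) ((c-t)/2) * u t else 0) -
        (if |t| ≤ |r| then H ((r+t)/2) ((r-t)/2) * u t else 0) := by
    funext t
    unfold kerK
    rw [← hc, ← hr]
    split_ifs <;> ring
  have hcont : ∀ d : ℝ, ContinuousOn (fun t => H ((d+t)/2) ((d-t)/2) * u t) (Set.Icc (-b) b) := by
    intro d
    have h : Continuous (fun t => H ((d+t)/2) ((d-t)/2) * v t) :=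
      (hH.comp (by fun_prop : Continuous fun t : ℝ => ((d+t)/2, (d-t)/2))).mul hv
    refine h.continuousOn.congr fun t ht => ?_
    simp only [huv t ht]
  rw [e, intervalIntegral.integral_sub, intervalIntegral.integral_const_mul,
    cut_integral _ c s h3, cut_integral _ r s h4, int_eq_FT H u v b c h1 huv,
    int_eq_FT H u v b r h2 huv]
  · exact (cut_integrable _ b c s h1 (hcont c)).const_mul 2
  · exact cut_integrable _ b r s h2 (hcont r)

theorem leg_natDegree (n : ℕ) : (legendreP n).natDegree < n + 1 := by
  unfold legendreP
  refine Nat.lt_succ_of_le ((Polynomial.natDegree_smul_le _ _).trans ?_)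
  refine (Polynomial.natDegree_iterate_derivative _ n).trans ?_
  have h1 : ((Polynomial.X ^ 2 - 1 : Polynomial ℝ) ^ n).natDegree ≤ n * 2 := by
    refine Polynomial.natDegree_pow_le.trans (Nat.mul_le_mul_left n ?_)
    compute_degree
  omega

theorem FT_sum (H : ℝ → ℝ → ℂ) (hH : Continuous (Function.uncurry H)) (n : ℕ) (c : ℕ → ℂ) (x : ℝ) :
    FT H (fun t => ∑ k ∈ Finset.range n, c k * (t:ℂ)^k) x =
      ∑ k ∈ Finset.range n, c k * FT H (fun t => (t:ℂ)^k) x := by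
  simp_rw [← FT_const_mul]
  unfold FT
  rw [← Finset.mul_sum]
  congr 1
  rw [← intervalIntegral.integral_finsetSum]
  · congr 1
    funext ξ
    rw [Finset.mul_sum]
  · intro k _
    have hHc : Continuous fun ξ : ℝ => H ξ (x - ξ) :=
      hH.comp (by fun_prop : Continuous fun ξ : ℝ => (ξ, x - ξ))
    exact Continuous.intervalIntegrable (hHc.mul (by fun_prop)) _ _

theorem beta_eq (b : ℝ) (H : ℝ → ℝ → ℂ) (hH : Continuous (Function.uncurry H))
    (f : ℝ → ℂ) (n : ℕ) (x : ℝ) (hx : x ∈ Set.Ioc (0:ℝ) b)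
    (hφ : ∀ k, formalPower f k x = (x:ℂ)^k + FT H (fun t => (t:ℂ)^k) x) :
    ((2*(n:ℂ)+1)/2 * ∫ z in (-1:ℝ)..1, H ((x + x * z)/2) (x - (x + x * z)/2) *
      (((legendreP n).eval z : ℝ) : ℂ)) = betaCoef f n x / (x:ℂ) := by
  have hx0 : x ≠ 0 := hx.1.ne'
  have hxc : (x:ℂ) ≠ 0 := by exact_mod_cast hx0
  have h1 := intervalIntegral.integral_comp_div (a := -x) (b := x)
    (fun z => H ((x + x * z)/2) (x - (x + x * z)/2) * (((legendreP n).eval z : ℝ) : ℂ)) hx0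
  have e1 : -x / x = -1 := by field_simp
  have e2 : x / x = 1 := by field_simp
  rw [e1, e2, Complex.real_smul] at h1
  have h2 : (∫ t in (-x)..x, H ((x + x * (t/x))/2) (x - (x + x * (t/x))/2) *
      (((legendreP n).eval (t/x) : ℝ) : ℂ)) =
      FT H (fun t => ∑ k ∈ Finset.range (n+1), (((legendreP n).coeff k : ℂ) / (x:ℂ)^k) * (t:ℂ)^k) x := by
    rw [← FT_eq]
    refine intervalIntegral.integral_congr fun t _ => ?_
    have e3 : x * (t/x) = t := by field_simp
    have e4 : x - (x + t)/2 = (x - t)/2 := by ring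
    simp only [e3, e4]
    congr 1
    rw [Polynomial.eval_eq_sum_range' (leg_natDegree n)]
    push_cast
    refine Finset.sum_congr rfl fun k _ => ?_
    rw [div_pow]
    ring
  rw [FT_sum H hH] at h2
  have h3 : ∑ k ∈ Finset.range (n+1), ((legendreP n).coeff k : ℂ) = 1 := by
    have := leg_eval_one n
    rw [Polynomial.eval_eq_sum_range' (leg_natDegree n)] at this
    simp only [one_pow, mul_one] at this
    exact_mod_cast this
  have h4 : (∑ k ∈ Finset.range (n + 1), ((legendreP n).coeff k : ℂ) * formalPower f k x / (x : ℂ) ^ k)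
      = 1 + ∑ k ∈ Finset.range (n+1), (((legendreP n).coeff k : ℂ) / (x:ℂ)^k) *
        FT H (fun t => (t:ℂ)^k) x := by
    rw [← h3, ← Finset.sum_add_distrib]
    refine Finset.sum_congr rfl fun k _ => ?_
    rw [hφ]
    field_simp
  unfold betaCoef
  rw [h4, ← h2, h1]
  field_simp
  ring

theorem series_main (b : ℝ) (H : ℝ → ℝ → ℂ) (hH : Continuous (Function.uncurry H))
    (hg : ∀ x : ℝ, ∃ g' : ℝ → ℂ, Continuous g' ∧ ∀ ξ, HasDerivAt (fun ξ => H ξ (x - ξ)) (g' ξ) ξ)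
    (f : ℝ → ℂ) (x : ℝ) (hx : x ∈ Set.Ioc (0:ℝ) b)
    (hφ : ∀ k, formalPower f k x = (x:ℂ)^k + FT H (fun t => (t:ℂ)^k) x) :
    TendstoUniformlyOn
          (fun N : ℕ => fun t : ℝ =>
            ∑ n ∈ Finset.range N, (betaCoef f n x / (x : ℂ)) * (((legendreP n).eval (t / x) : ℝ) : ℂ))
          (fun t : ℝ => kerK b H x t) atTop (Set.Icc (-x) x) := by
  have hx0 : x ≠ 0 := hx.1.ne'
  obtain ⟨g', hg', hgd⟩ := hg x
  have hd : ∀ z : ℝ, HasDerivAt (fun z => H ((x + x * z)/2) (x - (x + x * z)/2))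
      (((x/2 : ℝ)) • g' ((x + x * z)/2)) z := by
    intro z
    have h1 : HasDerivAt (fun z : ℝ => (x + x * z)/2) (x/2) z := by
      have := (((hasDerivAt_id' z).const_mul x).const_add x).div_const 2
      rwa [mul_one] at this
    exact (hgd ((x + x * z)/2)).scomp z h1
  have key := leg_uniform_complex _ _ (by fun_prop) hd
  have k2 := (key.comp (fun t => t / x)).mono (s' := Set.Icc (-x) x) (by
    intro t ht
    have hp := hx.1
    refine ⟨?_, ?_⟩
    · show -1 ≤ t / x
      rw [le_div_iff₀ hp]; linarith [ht.1]
    · show t / x ≤ 1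
      rw [div_le_iff₀ hp]; linarith [ht.2])
  refine (k2.congr ?_).congr_right ?_
  · refine Eventually.of_forall fun N t _ => ?_
    simp only [Function.comp]
    refine Finset.sum_congr rfl fun n _ => ?_
    rw [beta_eq b H hH f n x hx hφ]
  · intro t ht
    have e3 : x * (t/x) = t := by field_simp
    have e4 : x - (x + t)/2 = (x - t)/2 := by ring
    simp only [Function.comp, e3, e4]
    rw [kerK_eq b H x t (by rw [abs_of_pos hx.1]; exact hx.2)
      (by rw [abs_of_pos hx.1]; exact abs_le.2 ht)]

/-- the transmutation kernel is given by a Fourier–Legendre series. -/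
theorem transmutation_kernel_fourier_legendre
    (b : ℝ) (hb : 0 < b) (q : ℝ → ℂ) (hq : ContinuousOn q (Set.Icc (-b) b))
    (f f' : ℝ → ℂ)
    (hf : ∀ x ∈ Set.Icc (-b) b, HasDerivAt f (f' x) x)
    (hf' : ∀ x ∈ Set.Icc (-b) b, HasDerivAt f' (q x * f x) x)
    (hf0 : f 0 = 1) (hf'0 : f' 0 = 0)
    (hfne : ∀ x ∈ Set.Icc (-b) b, f x ≠ 0) :
    ∃ K : ℝ → ℝ → ℂ,
      ContinuousOn (fun p : ℝ × ℝ => K p.1 p.2) {p : ℝ × ℝ | |p.2| ≤ |p.1| ∧ |p.1| ≤ b} ∧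
      (      ∀ u u' u'' : ℝ → ℂ,
        (∀ x ∈ Set.Icc (-b) b, HasDerivAt u (u' x) x) →
        (∀ x ∈ Set.Icc (-b) b, HasDerivAt u' (u'' x) x) →
        ContinuousOn u'' (Set.Icc (-b) b) →
        ∃ D1 D2 : ℝ → ℂ,
          (∀ x ∈ Set.Icc (-b) b,
            HasDerivAt (fun s : ℝ => u s + ∫ t in (-s)..s, K s t * u t) (D1 x) x) ∧
          (∀ x ∈ Set.Icc (-b) b, HasDerivAt D1 (D2 x) x) ∧
          ContinuousOn D2 (Set.Icc (-b) b) ∧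
          ∀ x ∈ Set.Icc (-b) b,
            D2 x - q x * (u x + ∫ t in (-x)..x, K x t * u t)
              = u'' x + ∫ t in (-x)..x, K x t * u'' t) ∧
      ∀ x ∈ Set.Ioc (0:ℝ) b,
        TendstoUniformlyOn
          (fun N : ℕ => fun t : ℝ =>
            ∑ n ∈ Finset.range N, (betaCoef f n x / (x : ℂ)) * (((legendreP n).eval (t / x) : ℝ) : ℂ))
          (fun t : ℝ => K x t) atTop (Set.Icc (-x) x) := by
  obtain ⟨p, hp, hpq, hpr⟩ := ext_cont b hb q hq
  obtain ⟨M, hM⟩ := ext_bound b q hq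
  obtain ⟨H, L, Q, hH, hL, hQ, hHL, hLQ, hL0, hH0, hH00, hQH, hg⟩ := kernel_exists b hb p hp M (by
    intro x
    obtain ⟨y, hy, e⟩ := hpr x
    rw [e]; exact hM y hy)
  refine ⟨kerK b H, ?_, ?_, ?_⟩
  · have hc : Continuous fun s : ℝ × ℝ => H ((s.1 + s.2)/2) ((s.1 - s.2)/2) :=
      hH.comp (by fun_prop : Continuous fun s : ℝ × ℝ => ((s.1 + s.2)/2, (s.1 - s.2)/2))
    refine hc.continuousOn.congr fun s hs => ?_
    exact kerK_eq b H s.1 s.2 hs.2 hs.1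
  · intro u u' u'' hu hu' hu''
    obtain ⟨v, v', v'', hv, hv', hv'', hvu, hvu', hvu''⟩ := ext_C2 b hb u u' u'' hu hu' hu''
    have hvc : Continuous v := continuous_iff_continuousAt.2 fun x => (hv x).continuousAt
    obtain ⟨D1, D2, a1, a2, a3, a4, a5⟩ := trans_main b p hp H L Q hH hL hQ hHL hLQ hL0 hH0 hH00
      hQH v v' v'' hv hv' hv''
    have hval : ∀ x ∈ Set.Icc (-b) b, ∀ w w₂ : ℝ → ℂ, Continuous w₂ →
        (∀ x ∈ Set.Icc (-b) b, w₂ x = w x) → (∫ t in (-x)..x, kerK b H x t * w t) = FT H w₂ x := by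
      intro x hx w w₂ hw h
      have hx2 := abs_le.2 hx
      rw [kerK_int b hb H hH w w₂ hw h x (by linarith)]
      have e : clampR b x = x := by
        unfold clampR
        rw [min_eq_right hx.2, max_eq_right hx.1]
      have e2 : 2 * x - x = x := by ring
      rw [e, e2]; ring
    refine ⟨fun x => v' x + D1 x, fun x => v'' x + D2 x, ?_, ?_, ?_, ?_⟩
    · intro x hx
      simp only [hvu' x hx]
      refine (hu x hx).add ?_
      refine (clampR_deriv b hb (FT H v) (D1 x) x hx (a1 x)).congr_of_eventuallyEq ?_
      have hx2 := abs_le.2 hx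
      have hop : ∀ᶠ s : ℝ in 𝓝 x, |s| < 2 * b :=
        (continuous_abs.tendsto x).eventually_lt_const (by linarith)
      filter_upwards [hop] with s hs
      exact kerK_int b hb H hH u v hvc hvu s hs
    · intro x _
      exact (hv' x).add (a2 x)
    · exact (hv''.add a3).continuousOn
    · intro x hx
      rw [hval x hx u v hvc hvu, hval x hx u'' v'' hv'' hvu'']
      simp only [a5 x (abs_le.2 hx), hpq x hx, hvu x hx, hvu'' x hx]
      ring
  · intro x hx
    refine series_main b H hH hg f x hx fun k => ?_
    exact formal_eq b hb q p hp hpq H L Q hH hL hQ hHL hLQ hL0 hH0 hH00 hQH f f' hf hf' hf0 hf'0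
      hfne k x ⟨by linarith [hx.1], hx.2⟩

end
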